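/- Assume f satisfies (f1), (f2) with constant B ∈ [1,∞), and assumption (1.1a) with respect to the model pair (g, v, G); assume in addition that f is C¹ on [0,∞) with f(s) > 0, f'(s) > 0 and F(s) < ∞ for all s > 0. Then there exist R > 0 and a twice continuously differentiable function u : (0,R] → ℝ such that u(t) > 0 for t ∈ (0,R), u(R) = 0, u''(t) + u'(t)/t + f(u(t)) = 0 for all t ∈ (0,R), u(t) → ∞ as t → 0⁺, and there exist r₀ ∈ (0,R) and C > 0 with |u(t) − ũ(t)| ≤ C · f(ũ(t)) · F(ũ(t)) · sup_{0 < s ≤ t} ( R₁(s) + R₂(s) ) for all t ∈ (0,r₀). -/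

import Mathlib

open MeasureTheory Filter

/-- `Fint f s = ∫_s^∞ dτ / f(τ)`. -/
noncomputable def Fint (f : ℝ → ℝ) (s : ℝ) : ℝ := ∫ τ in Set.Ioi s, 1 / f τ

/-- `1/B₁[f](s) = (−log F(s))·(1 − f'(s)·F(s))`, with `G` playing the role of `F`. -/
noncomputable def invB1 (f G : ℝ → ℝ) (s : ℝ) : ℝ :=
  (-Real.log (G s)) * (1 - deriv f s * G s)

/-- `1/B₂[f](s) = f'(s)·F(s)·(log F(s))²·(f(s)·f''(s)·F(s)/f'(s) − 1)`,
with `G` playing the role of `F`. -/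
noncomputable def invB2 (f G : ℝ → ℝ) (s : ℝ) : ℝ :=
  deriv f s * G s * (Real.log (G s)) ^ 2 *
    (f s * deriv (deriv f) s * G s / deriv f s - 1)

/-- The model singular solution `v`. -/
noncomputable def modelv (B t : ℝ) : ℝ :=
  if B = 1 then Real.log (-2 * Real.log t) else (-2 * Real.log t) ^ ((B - 1) / B)

/-- The model nonlinearity `g`. -/
noncomputable def modelg (B s : ℝ) : ℝ :=
  if B = 1 then 4 * Real.exp (Real.exp s - 2 * s)
  else (4 / (B * (B / (B - 1)))) * s ^ (1 - 2 * (B / (B - 1))) * Real.exp (s ^ (B / (B - 1)))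

/-- The model function `G(s) = ∫_s^∞ dτ/g(τ)` in closed form. -/
noncomputable def modelG (B s : ℝ) : ℝ :=
  if B = 1 then (1 / 4) * (Real.exp s + 1) * Real.exp (-Real.exp s)
  else (B / 4) * (s ^ (B / (B - 1)) + 1) * Real.exp (-(s ^ (B / (B - 1))))

/-- The Emden–Fowler model profile `ψ`. -/
noncomputable def modelpsi (B ρ : ℝ) : ℝ :=
  if B = 1 then Real.log (ρ - 1) else (ρ - 1) ^ ((B - 1) / B)

/-- `R₁(t) = |1/B₁[f](ũ(t)) − 1/B₁[g](v(t))|`. -/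
noncomputable def R1 (f ut : ℝ → ℝ) (B t : ℝ) : ℝ :=
  |invB1 f (Fint f) (ut t) - invB1 (modelg B) (modelG B) (modelv B t)|

/-- `R₂(t) = |1/B₂[f](ũ(t)) − 1/B₂[g](v(t))|`. -/
noncomputable def R2 (f ut : ℝ → ℝ) (B t : ℝ) : ℝ :=
  |invB2 f (Fint f) (ut t) - invB2 (modelg B) (modelG B) (modelv B t)|


noncomputable def opK (κ r0 : ℝ) (G : ℝ → ℂ) (r : ℝ) : ℂ :=
  ∫ x in Set.Ioi (1:ℝ), ((x ^ (-κ - 1) : ℝ)) • G (max r r0 * x)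

lemma opK_kernel_integrable {κ : ℝ} (hκ : 0 < κ) :
    IntegrableOn (fun x : ℝ => x ^ (-κ - 1)) (Set.Ioi 1) :=
  integrableOn_Ioi_rpow_of_lt (by linarith) one_pos

lemma opK_kernel_integral {κ : ℝ} (hκ : 0 < κ) :
    ∫ x in Set.Ioi (1:ℝ), x ^ (-κ - 1) = 1 / κ := by
  rw [integral_Ioi_rpow_of_lt (by linarith) one_pos]
  simp

lemma opK_aesm {κ r0 : ℝ} {G : ℝ → ℂ} (hG : Continuous G) (r : ℝ) :
    AEStronglyMeasurable (fun x : ℝ => ((x ^ (-κ - 1) : ℝ)) • G (max r r0 * x))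
      (volume.restrict (Set.Ioi 1)) := by
  apply ContinuousOn.aestronglyMeasurable _ measurableSet_Ioi
  apply ContinuousOn.fun_smul
  · intro x hx
    have : (0:ℝ) < x := lt_trans one_pos hx
    exact (Real.continuousAt_rpow_const x _ (Or.inl this.ne')).continuousWithinAt
  · exact (hG.comp (continuous_const.mul continuous_id)).continuousOn

lemma opK_integrable {κ r0 : ℝ} (hκ : 0 < κ) {G : ℝ → ℂ} (hG : Continuous G) {M : ℝ}
    (hM : ∀ s, ‖G s‖ ≤ M) (r : ℝ) :
    IntegrableOn (fun x : ℝ => ((x ^ (-κ - 1) : ℝ)) • G (max r r0 * x)) (Set.Ioi 1) := by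
  refine Integrable.mono' ((opK_kernel_integrable hκ).mul_const M) (opK_aesm hG r) ?_
  filter_upwards [ae_restrict_mem measurableSet_Ioi] with x hx
  have : (0:ℝ) < x := lt_trans one_pos hx
  rw [norm_smul, Real.norm_of_nonneg (Real.rpow_nonneg this.le _)]
  exact mul_le_mul_of_nonneg_left (hM _) (Real.rpow_nonneg this.le _)

lemma opK_bound {κ r0 : ℝ} (hκ : 0 < κ) (hr0 : 0 < r0) {G : ℝ → ℂ} {M : ℝ} (r : ℝ)
    (hM : ∀ s, max r r0 ≤ s → ‖G s‖ ≤ M) : ‖opK κ r0 G r‖ ≤ M / κ := by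
  have hmax : 0 < max r r0 := lt_max_of_lt_right hr0
  have : ‖opK κ r0 G r‖ ≤ ∫ x in Set.Ioi (1:ℝ), x ^ (-κ - 1) * M := by
    apply norm_integral_le_of_norm_le ((opK_kernel_integrable hκ).mul_const M)
    filter_upwards [ae_restrict_mem measurableSet_Ioi] with x hx
    have hx0 : (0:ℝ) < x := lt_trans one_pos hx
    rw [norm_smul, Real.norm_of_nonneg (Real.rpow_nonneg hx0.le _)]
    refine mul_le_mul_of_nonneg_left (hM _ ?_) (Real.rpow_nonneg hx0.le _)
    exact le_mul_of_one_le_right hmax.le (le_of_lt hx)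
  rw [integral_mul_const, opK_kernel_integral hκ] at this
  calc _ ≤ _ := this
    _ = _ := by ring

lemma opK_continuous {κ r0 : ℝ} (hκ : 0 < κ) {G : ℝ → ℂ} (hG : Continuous G) {M : ℝ}
    (hM : ∀ s, ‖G s‖ ≤ M) : Continuous (opK κ r0 G) := by
  unfold opK
  refine continuous_of_dominated (bound := fun x => x ^ (-κ - 1) * M) (fun r => opK_aesm hG r) ?_
    ((opK_kernel_integrable hκ).mul_const M) ?_
  · intro r
    filter_upwards [ae_restrict_mem measurableSet_Ioi] with x hx
    have : (0:ℝ) < x := lt_trans one_pos hx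
    rw [norm_smul, Real.norm_of_nonneg (Real.rpow_nonneg this.le _)]
    exact mul_le_mul_of_nonneg_left (hM _) (Real.rpow_nonneg this.le _)
  · refine Eventually.of_forall fun x => ?_
    fun_prop

lemma opK_eq {κ r0 : ℝ} (hr0 : 0 < r0) (G : ℝ → ℂ) {r : ℝ} (hr : r0 ≤ r) :
    opK κ r0 G r = (r ^ κ : ℝ) • ∫ s in Set.Ioi r, ((s ^ (-κ - 1) : ℝ)) • G s := by
  have hrpos : 0 < r := lt_of_lt_of_le hr0 hr
  unfold opK
  rw [max_eq_left hr]
  have h1 := integral_comp_mul_left_Ioi (fun s => ((s ^ (-κ - 1) : ℝ)) • G s) 1 hrpos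
  rw [mul_one] at h1
  have h2 : (∫ x in Set.Ioi (1:ℝ), ((r * x) ^ (-κ - 1) : ℝ) • G (r * x))
      = (r ^ (-κ - 1) : ℝ) • ∫ x in Set.Ioi (1:ℝ), ((x ^ (-κ - 1) : ℝ)) • G (r * x) := by
    rw [← integral_smul]
    apply setIntegral_congr_fun measurableSet_Ioi
    intro x hx
    have hx0 : (0:ℝ) < x := lt_trans one_pos hx
    simp only
    rw [Real.mul_rpow hrpos.le hx0.le, mul_smul]
  rw [h2] at h1
  have h3 : (r ^ (κ + 1) : ℝ) * r ^ (-κ - 1) = 1 := by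
    rw [← Real.rpow_add hrpos]; simp
  have h4 : (r ^ (κ + 1) : ℝ) * r⁻¹ = r ^ κ := by
    rw [Real.rpow_add hrpos, Real.rpow_one]; field_simp
  calc _ = (r ^ (κ + 1) : ℝ) • ((r ^ (-κ - 1) : ℝ) •
        ∫ x in Set.Ioi (1:ℝ), ((x ^ (-κ - 1) : ℝ)) • G (r * x)) := by
        rw [smul_smul, h3, one_smul]
    _ = _ := by rw [h1, smul_smul, h4]

lemma opK_deriv {κ r0 : ℝ} (hκ : 0 < κ) (hr0 : 0 < r0) {G : ℝ → ℂ} (hG : Continuous G) {M : ℝ}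
    (hM : ∀ s, ‖G s‖ ≤ M) {r : ℝ} (hr : r0 < r) :
    HasDerivAt (opK κ r0 G) ((κ * opK κ r0 G r - G r) / r) r := by
  have hrpos : 0 < r := hr0.trans hr
  set h : ℝ → ℂ := fun s => ((s ^ (-κ - 1) : ℝ)) • G s with hh
  have hcont : ContinuousOn h (Set.Ioi 0) := by
    apply ContinuousOn.fun_smul _ hG.continuousOn
    intro x hx
    exact (Real.continuousAt_rpow_const x _ (Or.inl (ne_of_gt hx))).continuousWithinAt
  have hIntg : ∀ c > 0, IntegrableOn h (Set.Ioi c) := by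
    intro c hc
    have hk : IntegrableOn (fun x : ℝ => x ^ (-κ - 1)) (Set.Ioi c) :=
      integrableOn_Ioi_rpow_of_lt (by linarith) hc
    refine Integrable.mono' (hk.mul_const M) ?_ ?_
    · exact (hcont.mono (Set.Ioi_subset_Ioi hc.le)).aestronglyMeasurable measurableSet_Ioi
    · filter_upwards [ae_restrict_mem measurableSet_Ioi] with x hx
      have : (0:ℝ) < x := lt_trans hc hx
      rw [hh, norm_smul, Real.norm_of_nonneg (Real.rpow_nonneg this.le _)]
      exact mul_le_mul_of_nonneg_left (hM _) (Real.rpow_nonneg this.le _)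
  have hI : HasDerivAt (fun r => ∫ s in Set.Ioi r, h s) (-(h r)) r := by
    have e1 : (fun r => ∫ s in Set.Ioi r, h s) =ᶠ[nhds r]
        fun r => (∫ s in Set.Ioi r0, h s) - ∫ s in r0..r, h s := by
      filter_upwards [lt_mem_nhds hr] with x hx
      have := intervalIntegral.integral_Ioi_sub_Ioi' (μ := volume) (f := h) (a := r0) (b := x)
        (hIntg r0 hr0) (hIntg x (hr0.trans hx))
      rw [← this]; abel
    refine HasDerivAt.congr_of_eventuallyEq ?_ e1
    have h2 : HasDerivAt (fun r => ∫ s in r0..r, h s) (h r) r := by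
      apply intervalIntegral.integral_hasDerivAt_right
      · rw [intervalIntegrable_iff_integrableOn_Ioc_of_le hr.le]
        exact (hIntg r0 hr0).mono_set (fun x hx => hx.1)
      · exact hcont.stronglyMeasurableAtFilter isOpen_Ioi r hrpos
      · exact (hcont r hrpos).continuousAt (Ioi_mem_nhds hrpos)
    simpa using h2.const_sub (∫ s in Set.Ioi r0, h s)
  have e2 : opK κ r0 G =ᶠ[nhds r] fun r => (r ^ κ : ℝ) • ∫ s in Set.Ioi r, h s := by
    filter_upwards [lt_mem_nhds hr] with x hx
    exact opK_eq hr0 G hx.le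
  refine HasDerivAt.congr_of_eventuallyEq ?_ e2
  have h3 : HasDerivAt (fun r : ℝ => (r ^ κ : ℝ)) (κ * r ^ (κ - 1)) r :=
    Real.hasDerivAt_rpow_const (Or.inl hrpos.ne')
  have h4 := h3.fun_smul hI
  convert h4 using 1
  rw [opK_eq hr0 G hr.le]
  have h5 : (r ^ κ : ℝ) * r ^ (-κ - 1) = r⁻¹ := by
    rw [← Real.rpow_add hrpos, ← Real.rpow_neg_one]; congr 1; ring
  have h6 : (r ^ (κ - 1) : ℝ) = r ^ κ * r⁻¹ := by
    rw [Real.rpow_sub hrpos, Real.rpow_one]; rfl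
  have hrc : (r : ℂ) ≠ 0 := by exact_mod_cast hrpos.ne'
  rw [h6, smul_neg]
  simp only [hh]
  rw [smul_smul (r ^ κ : ℝ), h5]
  simp only [Complex.real_smul]
  push_cast
  field_simp
  ring

theorem fixpt (κ δ r0 : ℝ) (hδ0 : 0 ≤ δ) (hδ : δ < κ) (hr0 : 0 < r0) (Ψ : ℝ → ℂ → ℂ)
    (e : ℝ → ℝ)
    (hc : ContinuousOn (fun p : ℝ × ℂ => Ψ p.1 p.2) (Set.Ici r0 ×ˢ Set.univ))
    (hL : ∀ r, r0 ≤ r → ∀ w w', ‖Ψ r w - Ψ r w'‖ ≤ δ * ‖w - w'‖)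
    (h0 : ∀ r, r0 ≤ r → ‖Ψ r 0‖ ≤ e r) (he : AntitoneOn e (Set.Ici r0)) :
    ∃ V : ℝ → ℂ, (∀ r, r0 < r → HasDerivAt V ((κ * V r + Ψ r (V r)) / r) r) ∧
      ∀ r, r0 ≤ r → ‖V r‖ ≤ e r / (κ - δ) := by
  have hκ : 0 < κ := lt_of_le_of_lt hδ0 hδ
  set Φ : ℝ → ℂ → ℂ := fun r w => Ψ (max r r0) w with hΦ
  have hΦc : Continuous (fun p : ℝ × ℂ => Φ p.1 p.2) := by
    have : Continuous (fun p : ℝ × ℂ => ((max p.1 r0, p.2) : ℝ × ℂ)) := by fun_prop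
    exact hc.comp_continuous this (fun p => ⟨Set.mem_Ici.2 (le_max_right _ _), trivial⟩)
  have hΦ0 : ∀ r w, ‖Φ r w‖ ≤ e (max r r0) + δ * ‖w‖ := by
    intro r w
    have h1 := hL (max r r0) (le_max_right _ _) w 0
    have h2 := h0 (max r r0) (le_max_right _ _)
    rw [sub_zero] at h1
    calc ‖Φ r w‖ = ‖(Ψ (max r r0) w - Ψ (max r r0) 0) + Ψ (max r r0) 0‖ := by simp [hΦ]
      _ ≤ _ := norm_add_le _ _
      _ ≤ _ := by linarith
  have hee : ∀ r, e (max r r0) ≤ e r0 := fun r =>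
    he (Set.mem_Ici.2 le_rfl) (Set.mem_Ici.2 (le_max_right _ _)) (le_max_right _ _)
  have hGc : ∀ V : BoundedContinuousFunction ℝ ℂ, Continuous (fun s => Φ s (V s)) := fun V =>
    hΦc.comp (continuous_id.prodMk V.continuous)
  have hGb : ∀ V : BoundedContinuousFunction ℝ ℂ, ∀ s, ‖Φ s (V s)‖ ≤ e r0 + δ * ‖V‖ := by
    intro V s
    have := mul_le_mul_of_nonneg_left (V.norm_coe_le_norm s) hδ0
    linarith [hΦ0 s (V s), hee s]
  let T : BoundedContinuousFunction ℝ ℂ → BoundedContinuousFunction ℝ ℂ := fun V =>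
    BoundedContinuousFunction.ofNormedAddCommGroup
      (fun r => - opK κ r0 (fun s => Φ s (V s)) r)
      ((opK_continuous hκ (hGc V) (hGb V)).neg) ((e r0 + δ * ‖V‖) / κ)
      (fun r => by
        rw [norm_neg]
        exact opK_bound hκ hr0 r (fun s _ => hGb V s))
  have hT : ContractingWith (Real.toNNReal (δ / κ)) T := by
    refine ⟨?_, ?_⟩
    · rw [← Real.toNNReal_one, Real.toNNReal_lt_toNNReal_iff one_pos]
      rw [div_lt_one hκ]; exact hδ
    · apply LipschitzWith.of_dist_le_mul
      intro V W
      rw [Real.coe_toNNReal _ (by positivity), BoundedContinuousFunction.dist_le (by positivity)]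
      intro r
      have : T V r - T W r = opK κ r0 (fun s => Φ s (W s) - Φ s (V s)) r := by
        change - opK κ r0 (fun s => Φ s (V s)) r - - opK κ r0 (fun s => Φ s (W s)) r = _
        unfold opK
        simp only [smul_sub]
        rw [integral_sub (opK_integrable hκ (hGc W) (hGb W) r)
          (opK_integrable hκ (hGc V) (hGb V) r)]
        ring
      rw [dist_eq_norm, this]
      have hb : ∀ s, max r r0 ≤ s → ‖Φ s (W s) - Φ s (V s)‖ ≤ δ * dist V W := by
        intro s _
        refine (hL _ (le_max_right _ _) _ _).trans ?_
        apply mul_le_mul_of_nonneg_left _ hδ0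
        rw [← dist_eq_norm, dist_comm]
        exact BoundedContinuousFunction.dist_coe_le_dist s
      refine (opK_bound hκ hr0 r hb).trans (le_of_eq ?_)
      ring
  set V := ContractingWith.fixedPoint T hT with hV
  have hfix : T V = V := hT.fixedPoint_isFixedPt
  have hVr : ∀ r, V r = - opK κ r0 (fun s => Φ s (V s)) r := by
    intro r
    conv_lhs => rw [← hfix]
    rfl
  refine ⟨V, ?_, ?_⟩
  · intro r hr
    have h1 := (opK_deriv hκ hr0 (hGc V) (hGb V) hr).neg
    have h2 : (fun r => - opK κ r0 (fun s => Φ s (V s)) r) = V := by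
      funext r; rw [hVr r]
    change HasDerivAt (fun r => - opK κ r0 (fun s => Φ s (V s)) r) _ _ at h1
    rw [h2] at h1
    convert h1 using 1
    have h3 : Ψ r (V r) = Φ r (V r) := by simp [hΦ, max_eq_left hr.le]
    have h4 : opK κ r0 (fun s => Φ s (V s)) r = - V r := by rw [hVr r]; simp
    rw [h3, h4]; ring
  · intro r hr
    -- supremum over [r, ∞)
    set A := sSup ((fun s => ‖V s‖) '' Set.Ici r) with hA
    have hbdd : BddAbove ((fun s => ‖V s‖) '' Set.Ici r) :=
      ⟨‖V‖, by rintro _ ⟨s, _, rfl⟩; exact V.norm_coe_le_norm s⟩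
    have hleA : ∀ s, r ≤ s → ‖V s‖ ≤ A := fun s hs => le_csSup hbdd ⟨s, hs, rfl⟩
    have hA2 : A ≤ (e r + δ * A) / κ := by
      apply csSup_le (Set.nonempty_Ici.image _)
      rintro _ ⟨s, hs, rfl⟩
      have hs' : r ≤ s := hs
      simp only
      rw [hVr s, norm_neg]
      apply opK_bound hκ hr0
      intro x hx
      have hsx : s ≤ x := (le_max_left _ _).trans hx
      have h1 := hΦ0 x (V x)
      have hx0 : r0 ≤ x := hr.trans (hs'.trans hsx)
      rw [max_eq_left hx0] at h1
      have h2 := he (Set.mem_Ici.2 hr) (Set.mem_Ici.2 hx0) (hs'.trans hsx)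
      have h3 := mul_le_mul_of_nonneg_left (hleA x (hs'.trans hsx)) hδ0
      linarith
    rw [le_div_iff₀ hκ] at hA2
    have hA3 : A ≤ e r / (κ - δ) := by
      rw [le_div_iff₀ (by linarith)]; linarith
    exact (hleA r le_rfl).trans hA3


lemma Fint_hasDerivAt {f : ℝ → ℝ} {s₀ : ℝ} (hf : ContinuousOn f (Set.Ioi s₀))
    (hfpos : ∀ s, s₀ < s → 0 < f s)
    (hfint : ∀ s, s₀ < s → IntegrableOn (fun τ => 1 / f τ) (Set.Ioi s)) {s : ℝ} (hs : s₀ < s) :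
    HasDerivAt (Fint f) (-(1 / f s)) s := by
  have hcont : ContinuousOn (fun τ => 1 / f τ) (Set.Ioi s₀) :=
    continuousOn_const.div hf (fun x hx => (hfpos x hx).ne')
  obtain ⟨c, hc, hcs⟩ := exists_between hs
  have e1 : Fint f =ᶠ[nhds s]
      fun r => (∫ τ in Set.Ioi c, 1 / f τ) - ∫ τ in c..r, 1 / f τ := by
    filter_upwards [lt_mem_nhds hcs] with x hx
    have := intervalIntegral.integral_Ioi_sub_Ioi' (μ := volume) (f := fun τ => 1 / f τ)
      (hfint c hc) (hfint x (hc.trans hx))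
    unfold Fint
    rw [← this]; abel
  refine HasDerivAt.congr_of_eventuallyEq ?_ e1
  have h2 : HasDerivAt (fun r => ∫ τ in c..r, 1 / f τ) (1 / f s) s := by
    apply intervalIntegral.integral_hasDerivAt_right
    · rw [intervalIntegrable_iff_integrableOn_Ioc_of_le hcs.le]
      exact (hfint c hc).mono_set (fun x hx => hx.1)
    · exact hcont.stronglyMeasurableAtFilter isOpen_Ioi s hs
    · exact (hcont s hs).continuousAt (Ioi_mem_nhds hs)
  simpa using h2.const_sub (∫ τ in Set.Ioi c, 1 / f τ)

lemma Fint_strictAntiOn {f : ℝ → ℝ} {s₀ : ℝ} (hf : ContinuousOn f (Set.Ioi s₀))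
    (hfpos : ∀ s, s₀ < s → 0 < f s)
    (hfint : ∀ s, s₀ < s → IntegrableOn (fun τ => 1 / f τ) (Set.Ioi s)) :
    StrictAntiOn (Fint f) (Set.Ioi s₀) := by
  apply strictAntiOn_of_deriv_neg (convex_Ioi _)
  · intro x hx
    exact (Fint_hasDerivAt hf hfpos hfint hx).continuousAt.continuousWithinAt
  · intro x hx
    rw [interior_Ioi] at hx
    rw [(Fint_hasDerivAt hf hfpos hfint hx).deriv]
    have := hfpos x hx
    simp only [Left.neg_neg_iff]; positivity

lemma Fint_pos {f : ℝ → ℝ} {s₀ : ℝ} (hf : ContinuousOn f (Set.Ioi s₀))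
    (hfpos : ∀ s, s₀ < s → 0 < f s)
    (hfint : ∀ s, s₀ < s → IntegrableOn (fun τ => 1 / f τ) (Set.Ioi s)) {s : ℝ} (hs : s₀ < s) :
    0 < Fint f s := by
  have h1 := Fint_strictAntiOn hf hfpos hfint (Set.mem_Ioi.2 hs)
    (Set.mem_Ioi.2 (show s₀ < s + 1 by linarith)) (by linarith)
  refine lt_of_le_of_lt ?_ h1
  apply setIntegral_nonneg measurableSet_Ioi
  intro x hx
  have : s₀ < x := by have := Set.mem_Ioi.1 hx; linarith
  have := hfpos x this
  positivity

lemma Fint_tendsto {f : ℝ → ℝ} {s₀ : ℝ}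
    (hfint : ∀ s, s₀ < s → IntegrableOn (fun τ => 1 / f τ) (Set.Ioi s)) :
    Tendsto (Fint f) atTop (nhds 0) := by
  have hc : s₀ < s₀ + 1 := by linarith
  have h1 := intervalIntegral_tendsto_integral_Ioi (s₀ + 1) (hfint _ hc) tendsto_id
  have h2 := h1.const_sub (Fint f (s₀ + 1))
  unfold Fint at h2
  rw [sub_self] at h2
  refine h2.congr' ?_
  filter_upwards [eventually_gt_atTop (s₀ + 1)] with x hx
  have := intervalIntegral.integral_Ioi_sub_Ioi' (μ := volume) (f := fun τ => 1 / f τ)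
      (hfint _ hc) (hfint x (hc.trans hx))
  simp only [id]
  unfold Fint
  rw [← this]; abel

lemma exists_S {f : ℝ → ℝ} {s₀ : ℝ} (hf : ContinuousOn f (Set.Ioi s₀))
    (hfpos : ∀ s, s₀ < s → 0 < f s)
    (hfint : ∀ s, s₀ < s → IntegrableOn (fun τ => 1 / f τ) (Set.Ioi s)) :
    ∃ (S : ℝ → ℝ) (y0 : ℝ), 0 < y0 ∧
      (∀ y, y0 < y → s₀ < S y ∧ Fint f (S y) = Real.exp (-y) ∧
        HasDerivAt S (f (S y) * Real.exp (-y)) y) ∧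
      Tendsto S atTop atTop ∧
      (∀ y s, y0 < y → s₀ < s → Fint f s = Real.exp (-y) → s = S y) := by
  have hanti := Fint_strictAntiOn hf hfpos hfint
  have hpos : ∀ s, s₀ < s → 0 < Fint f s := fun s hs => Fint_pos hf hfpos hfint hs
  have hder : ∀ s, s₀ < s → HasDerivAt (Fint f) (-(1 / f s)) s :=
    fun s hs => Fint_hasDerivAt hf hfpos hfint hs
  set c := s₀ + 1 with hc
  have hc0 : s₀ < c := by linarith
  set y0 := max 1 (-Real.log (Fint f c)) with hy0
  have hex : ∀ y, y0 < y → ∃ s, c < s ∧ Fint f s = Real.exp (-y) := by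
    intro y hy
    have hyc : Real.exp (-y) < Fint f c := by
      rw [← Real.lt_log_iff_exp_lt (hpos c hc0)]
      have := le_max_right 1 (-Real.log (Fint f c))
      linarith
    obtain ⟨b, hb⟩ := ((Fint_tendsto hfint).eventually_lt_const (Real.exp_pos (-y))).exists_forall_of_atTop
    set b' := max b (c + 1)
    have hb' : Fint f b' < Real.exp (-y) := hb b' (le_max_left _ _)
    have hcb : c ≤ b' := by have := le_max_right b (c+1); linarith
    have hco : ContinuousOn (Fint f) (Set.Icc c b') := fun x hx =>
      (hder x (lt_of_lt_of_le hc0 hx.1)).continuousAt.continuousWithinAt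
    obtain ⟨s, hs, hse⟩ := intermediate_value_Icc' hcb hco ⟨hb'.le, hyc.le⟩
    refine ⟨s, lt_of_le_of_ne hs.1 ?_, hse⟩
    rintro rfl
    linarith
  choose! S hS1 hS2 using hex
  have hmono : StrictMonoOn S (Set.Ioi y0) := by
    intro y hy y' hy' hyy
    by_contra hcon
    have h1 := hanti.antitoneOn (Set.mem_Ioi.2 (hc0.trans (hS1 y' hy')))
      (Set.mem_Ioi.2 (hc0.trans (hS1 y hy))) (not_lt.1 hcon)
    rw [hS2 y hy, hS2 y' hy', Real.exp_le_exp] at h1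
    linarith
  have huniq : ∀ y s, y0 < y → s₀ < s → Fint f s = Real.exp (-y) → s = S y := by
    intro y s hy hs he
    exact hanti.injOn (Set.mem_Ioi.2 hs) (Set.mem_Ioi.2 (hc0.trans (hS1 y hy)))
      (he.trans (hS2 y hy).symm)
  have hySc : ∀ s, S (y0 + 1) < s → y0 < -Real.log (Fint f s) ∧ S (-Real.log (Fint f s)) = s := by
    intro s hs
    have hs0 : s₀ < s := (hc0.trans (hS1 _ (by linarith))).trans hs
    have h1 := hanti (Set.mem_Ioi.2 (hc0.trans (hS1 (y0 + 1) (by linarith))))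
      (Set.mem_Ioi.2 hs0) hs
    rw [hS2 (y0+1) (by linarith)] at h1
    have h2 : Real.log (Fint f s) < -(y0 + 1) := by
      rwa [Real.log_lt_iff_lt_exp (hpos s hs0)]
    have h3 : y0 < -Real.log (Fint f s) := by linarith
    refine ⟨h3, ?_⟩
    symm
    apply huniq _ _ h3 hs0
    rw [neg_neg, Real.exp_log (hpos s hs0)]
  refine ⟨S, y0 + 1, ?_, ?_, ?_, ?_⟩
  · have := le_max_left 1 (-Real.log (Fint f c)); linarith
  · intro y hy
    have hy' : y0 < y := by linarith
    refine ⟨hc0.trans (hS1 y hy'), hS2 y hy', ?_⟩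
    have hs0 := hc0.trans (hS1 y hy')
    have hcont : ContinuousAt S y := by
      apply hmono.continuousAt_of_image_mem_nhds (Ioi_mem_nhds hy')
      refine mem_of_superset (Ioi_mem_nhds (hmono (Set.mem_Ioi.2 (show y0 < y0 + 1 by linarith)) hy' hy)) ?_
      intro s hs
      exact ⟨_, (hySc s hs).1, (hySc s hs).2⟩
    have hL : HasDerivAt (fun s => -Real.log (Fint f s))
        (-(-(1 / f (S y)) / Fint f (S y))) (S y) :=
      ((hder _ hs0).log (hpos _ hs0).ne').neg
    have hfp := hfpos _ hs0
    have hne : (-(-(1 / f (S y)) / Fint f (S y))) ≠ 0 := by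
      have := hpos _ hs0
      rw [neg_div, neg_neg]
      positivity
    have h4 := HasDerivAt.of_local_left_inverse hcont hL hne (by
      filter_upwards [lt_mem_nhds hy'] with x hx
      rw [hS2 x hx, Real.log_exp, neg_neg])
    refine h4.congr_deriv ?_
    rw [hS2 y hy']
    have := (Real.exp_pos (-y)).ne'
    field_simp
  · rw [tendsto_atTop]
    intro M
    set M' := max M c + 1
    have hM' : s₀ < M' := by have := le_max_right M c; simp only [M']; linarith
    filter_upwards [eventually_gt_atTop y0, eventually_gt_atTop (-Real.log (Fint f M'))] with y h1 h2
    by_contra hcon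
    have h5 : S y ≤ M' := by
      have := le_max_left M c; simp only [M']; linarith [not_le.1 hcon]
    have h3 := hanti.antitoneOn (Set.mem_Ioi.2 (hc0.trans (hS1 y h1))) (Set.mem_Ioi.2 hM') h5
    rw [hS2 y h1] at h3
    have h6 := (Real.le_log_iff_exp_le (Real.exp_pos _)).2 (le_of_eq (Real.exp_log (Real.exp_pos (-y))))
    have h7 := Real.log_le_log (hpos _ hM') h3
    rw [Real.log_exp] at h7
    linarith
  · intro y s hy hs he
    exact huniq y s (by linarith) hs he


lemma m_facts {f S : ℝ → ℝ} {s₀ y0 B : ℝ} (hf : ContDiffOn ℝ 2 f (Set.Ioi s₀))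
    (hf' : ∀ s, s₀ < s → 0 < deriv f s) (hy0 : 0 < y0)
    (hS : ∀ y, y0 < y → s₀ < S y ∧ Fint f (S y) = Real.exp (-y) ∧
        HasDerivAt S (f (S y) * Real.exp (-y)) y)
    (hSt : Tendsto S atTop atTop)
    (hf2a : Tendsto (fun s => deriv f s * Fint f s) atTop (nhds 1))
    (hf2b : Tendsto (fun s => invB2 f (Fint f) s) atTop (nhds (1 / B))) :
    (∀ y, y0 < y → HasDerivAt (fun y => 1 - deriv f (S y) * Real.exp (-y))
      (-(invB2 f (Fint f) (S y)) / y ^ 2) y) ∧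
    ContinuousOn (fun y => invB2 f (Fint f) (S y)) (Set.Ioi y0) ∧
    (∀ y, y0 < y → y * (1 - deriv f (S y) * Real.exp (-y)) = invB1 f (Fint f) (S y)) ∧
    Tendsto (fun y => y * (1 - deriv f (S y) * Real.exp (-y))) atTop (nhds (1 / B)) ∧
    Tendsto (fun y => invB2 f (Fint f) (S y)) atTop (nhds (1 / B)) := by
  have hd1 : ContDiffOn ℝ 1 (deriv f) (Set.Ioi s₀) :=
    hf.deriv_of_isOpen isOpen_Ioi (by norm_num)
  have hd2 : ContinuousOn (deriv (deriv f)) (Set.Ioi s₀) :=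
    hd1.continuousOn_deriv_of_isOpen isOpen_Ioi (by norm_num)
  have hdf : ∀ s, s₀ < s → HasDerivAt (deriv f) (deriv (deriv f) s) s := fun s hs =>
    ((hd1.differentiableOn (by norm_num)).differentiableAt (Ioi_mem_nhds hs)).hasDerivAt
  have hB2 : ∀ y, y0 < y → invB2 f (Fint f) (S y) =
      deriv f (S y) * Real.exp (-y) * y ^ 2 *
        (f (S y) * deriv (deriv f) (S y) * Real.exp (-y) / deriv f (S y) - 1) := by
    intro y hy
    unfold invB2
    rw [(hS y hy).2.1, Real.log_exp, neg_sq]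
  have h1 : ∀ y, y0 < y → HasDerivAt (fun y => 1 - deriv f (S y) * Real.exp (-y))
      (-(invB2 f (Fint f) (S y)) / y ^ 2) y := by
    intro y hy
    obtain ⟨hs, hF, hSd⟩ := hS y hy
    have a1 : HasDerivAt (fun y => deriv f (S y))
        (deriv (deriv f) (S y) * (f (S y) * Real.exp (-y))) y := (hdf _ hs).comp y hSd
    have a2 : HasDerivAt (fun y : ℝ => Real.exp (-y)) (-Real.exp (-y)) y := by
      simpa using (hasDerivAt_id y).neg.exp
    refine ((a1.mul a2).const_sub 1).congr_deriv ?_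
    rw [hB2 y hy]
    have h0 := (hf' _ hs).ne'
    have h2 : y ≠ 0 := by linarith
    field_simp
    ring
  have h2 : ContinuousOn (fun y => invB2 f (Fint f) (S y)) (Set.Ioi y0) := by
    have hSc : ContinuousOn S (Set.Ioi y0) := fun y hy =>
      (hS y hy).2.2.continuousAt.continuousWithinAt
    have hm : Set.MapsTo S (Set.Ioi y0) (Set.Ioi s₀) := fun y hy => (hS y hy).1
    have c1 := hf.continuousOn.comp hSc hm
    have c2 := hd1.continuousOn.comp hSc hm
    have c3 := hd2.comp hSc hm
    have : ContinuousOn (fun y => deriv f (S y) * Real.exp (-y) * y ^ 2 *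
        (f (S y) * deriv (deriv f) (S y) * Real.exp (-y) / deriv f (S y) - 1)) (Set.Ioi y0) := by
      have c4 : ContinuousOn (fun y : ℝ => Real.exp (-y)) (Set.Ioi y0) := by fun_prop
      have c5 : ContinuousOn (fun y : ℝ => y ^ 2) (Set.Ioi y0) := by fun_prop
      exact ((c2.mul c4).mul c5).mul ((((c1.mul c3).mul c4).div c2
        (fun y hy => (hf' _ (hS y hy).1).ne')).sub continuousOn_const)
    exact this.congr (fun y hy => hB2 y hy)
  have h5 : Tendsto (fun y => invB2 f (Fint f) (S y)) atTop (nhds (1 / B)) := hf2b.comp hSt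
  refine ⟨h1, h2, ?_, ?_, h5⟩
  · intro y hy
    unfold invB1
    rw [(hS y hy).2.1, Real.log_exp, neg_neg]
  · have hm0 : Tendsto (fun y => 1 - deriv f (S y) * Real.exp (-y)) atTop (nhds 0) := by
      have := (hf2a.comp hSt).const_sub 1
      rw [sub_self] at this
      refine this.congr' ?_
      filter_upwards [eventually_gt_atTop y0] with y hy
      simp only [Function.comp]
      rw [(hS y hy).2.1]
    have hl := HasDerivAt.lhopital_zero_atTop (f := fun y => 1 - deriv f (S y) * Real.exp (-y))
      (g := fun y : ℝ => y⁻¹) (f' := fun y => -(invB2 f (Fint f) (S y)) / y ^ 2)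
      (g' := fun y => -(y ^ 2)⁻¹) (l := nhds (1 / B))
      (by filter_upwards [eventually_gt_atTop y0] with y hy using h1 y hy)
      (by filter_upwards [eventually_gt_atTop y0] with y hy using hasDerivAt_inv (by linarith))
      (by filter_upwards [eventually_gt_atTop y0] with y hy
          have : y ≠ 0 := by linarith
          simp [this]) hm0 tendsto_inv_atTop_zero (by
          refine h5.congr' ?_
          filter_upwards [eventually_gt_atTop y0] with y hy
          have : y ≠ 0 := by linarith
          field_simp)
    refine hl.congr' ?_
    filter_upwards [eventually_gt_atTop y0] with y hy
    rw [div_inv_eq_mul, mul_comm]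


/-- The model `1 - g' G` as a function of `ρ`. -/
noncomputable def mgr (B ρ : ℝ) : ℝ := (1 + (ρ + 1) / B) / ρ ^ 2

noncomputable def mgr' (B ρ : ℝ) : ℝ := 1 / (B * ρ ^ 2) - 2 * (1 + (ρ + 1) / B) / ρ ^ 3

lemma mgr_hasDerivAt {B ρ : ℝ} (hB : 1 ≤ B) (hρ : 0 < ρ) :
    HasDerivAt (mgr B) (mgr' B ρ) ρ := by
  have h1 : HasDerivAt (fun ρ : ℝ => 1 + (ρ + 1) / B) (1 / B) ρ :=
    (((hasDerivAt_id ρ).add_const 1).div_const B).const_add 1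
  have h2 : HasDerivAt (fun ρ : ℝ => ρ ^ 2) (2 * ρ) ρ := by simpa using hasDerivAt_pow 2 ρ
  refine (h1.div h2 (by positivity)).congr_deriv ?_
  have : B ≠ 0 := by linarith
  unfold mgr'
  field_simp

lemma mgr_lt_one {B ρ : ℝ} (hB : 1 ≤ B) (hρ : 2 < ρ) : mgr B ρ < 1 := by
  have hB0 : 0 < B := by linarith
  unfold mgr
  rw [div_lt_one (by positivity)]
  have : (ρ + 1) / B ≤ ρ + 1 := div_le_self (by linarith) hB
  nlinarith

lemma invB2_gen {B : ℝ} (hB : 1 ≤ B) {g G P : ℝ → ℝ} {s P' : ℝ} (hP : 2 < P s) (hg : 0 < g s)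
    (hG : 0 < G s)
    (hd : ∀ᶠ x in nhds s, deriv g x = (1 - mgr B (P x)) / G x)
    (hPd : HasDerivAt P P' s) (hGd : HasDerivAt G (-(1 / g s)) s)
    (hrel : g s * G s * P' = (P s + 1) / P s) :
    invB2 g G s = - (Real.log (G s)) ^ 2 * (mgr' B (P s) * ((P s + 1) / P s)) := by
  have h1 : HasDerivAt (fun x => mgr B (P x)) (mgr' B (P s) * P') s :=
    (mgr_hasDerivAt hB (by linarith)).comp s hPd
  have h2 := ((h1.const_sub 1).div hGd hG.ne').congr_of_eventuallyEq hd
  unfold invB2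
  rw [h2.deriv, hd.self_of_nhds, ← hrel]
  have h3 := mgr_lt_one hB hP
  have h4 : 1 - mgr B (P s) ≠ 0 := by linarith
  field_simp
  ring

noncomputable def vvr (B ρ : ℝ) : ℝ :=
  if B = 1 then Real.log ρ else ρ ^ ((B - 1) / B)

lemma model_facts {B ρ : ℝ} (hB : 1 ≤ B) (hρ : 2 < ρ) :
    modelG B (vvr B ρ) = B / 4 * (ρ + 1) * Real.exp (-ρ) ∧
    deriv (modelg B) (vvr B ρ) * modelG B (vvr B ρ) = 1 - mgr B ρ ∧
    invB2 (modelg B) (modelG B) (vvr B ρ) =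
      - (Real.log (modelG B (vvr B ρ))) ^ 2 * (mgr' B ρ * ((ρ + 1) / ρ)) := by
  have hρ0 : 0 < ρ := by linarith
  rcases eq_or_lt_of_le hB with h1 | h1
  · subst h1
    have hv : vvr 1 ρ = Real.log ρ := by simp [vvr]
    have hg : modelg 1 = fun s => 4 * Real.exp (Real.exp s - 2 * s) := by funext s; simp [modelg]
    have hG : modelG 1 = fun s => (1 / 4) * (Real.exp s + 1) * Real.exp (-Real.exp s) := by
      funext s; simp [modelG]
    rw [hv]
    have hP : Real.exp (Real.log ρ) = ρ := Real.exp_log hρ0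
    have hee : ∀ x, Real.exp (Real.exp x - 2 * x) = Real.exp (Real.exp x) / (Real.exp x) ^ 2 := by
      intro x
      rw [Real.exp_sub, ← Real.exp_nat_mul]; norm_num
    have hgd : ∀ x, HasDerivAt (modelg 1)
        (4 * (Real.exp (Real.exp x - 2 * x) * (Real.exp x - 2))) x := by
      intro x
      rw [hg]
      have : HasDerivAt (fun x => Real.exp x - 2 * x) (Real.exp x - 2) x := by
        simpa using (Real.hasDerivAt_exp x).fun_sub ((hasDerivAt_id x).const_mul 2)
      exact this.exp.const_mul 4
    have hGd : ∀ x, HasDerivAt (modelG 1) (-(1 / modelg 1 x)) x := by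
      intro x
      rw [hG, hg]
      have a1 := ((Real.hasDerivAt_exp x).add_const 1).const_mul (1/4 : ℝ)
      have a2 := (Real.hasDerivAt_exp x).neg.exp
      refine (a1.mul a2).congr_deriv ?_
      simp only [hee, Pi.neg_apply]
      rw [Real.exp_neg]
      field_simp
      ring
    have hGpos : ∀ x, 0 < modelG 1 x := by intro x; rw [hG]; positivity
    have hdd : ∀ x, deriv (modelg 1) x = (1 - mgr 1 (Real.exp x)) / modelG 1 x := by
      intro x
      rw [(hgd x).deriv, eq_div_iff (hGpos x).ne', hG]
      simp only [hee, mgr]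
      rw [Real.exp_neg]
      field_simp
      ring
    refine ⟨?_, ?_, ?_⟩
    · rw [hG]; simp only [hP]
    · rw [hdd, hP, div_mul_cancel₀ _ (hGpos _).ne']
    · have := invB2_gen (B := 1) le_rfl (g := modelg 1) (G := modelG 1) (P := Real.exp)
        (s := Real.log ρ) (P' := Real.exp (Real.log ρ)) (by rw [hP]; exact hρ)
        (by rw [hg]; positivity) (hGpos _) (Eventually.of_forall hdd)
        (Real.hasDerivAt_exp _) (hGd _) (by
          rw [hG, hg]
          simp only [hee]
          rw [Real.exp_neg]
          field_simp)
      rw [this, hP]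
  · have hB0 : 0 < B := by linarith
    have hB1 : 0 < B - 1 := by linarith
    have hne : B ≠ 1 := h1.ne'
    set b := B / (B - 1) with hb
    have hb0 : 0 < b := by positivity
    have hBb : B * b = B + b := by rw [hb]; field_simp; ring
    have hv : vvr B ρ = ρ ^ ((B - 1) / B) := by simp [vvr, hne]
    have hg : modelg B = fun s => (4 / (B * b)) * s ^ (1 - 2 * b) * Real.exp (s ^ b) := by
      funext s; simp [modelg, hne, hb]
    have hG : modelG B = fun s => (B / 4) * (s ^ b + 1) * Real.exp (-(s ^ b)) := by
      funext s; simp [modelG, hne, hb]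
    rw [hv]
    set s := ρ ^ ((B - 1) / B) with hs
    have hs0 : 0 < s := Real.rpow_pos_of_pos hρ0 _
    have hP : s ^ b = ρ := by
      rw [hs, ← Real.rpow_mul hρ0.le, hb]
      rw [show (B - 1) / B * (B / (B - 1)) = 1 by field_simp, Real.rpow_one]
    have hx1 : ∀ x : ℝ, 0 < x → x ^ (1 - 2 * b) = x / (x ^ b) ^ 2 := by
      intro x hx
      rw [Real.rpow_sub hx, Real.rpow_one, ← Real.rpow_natCast, ← Real.rpow_mul hx.le]
      norm_num; ring_nf
    have hPd : ∀ x : ℝ, 0 < x → HasDerivAt (fun x : ℝ => x ^ b) (b * x ^ b / x) x := by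
      intro x hx
      refine (Real.hasDerivAt_rpow_const (Or.inl hx.ne')).congr_deriv ?_
      rw [Real.rpow_sub hx, Real.rpow_one]; ring
    have hgd : ∀ x : ℝ, 0 < x → HasDerivAt (modelg B)
        ((4 / (B * b)) * Real.exp (x ^ b) * ((1 - 2 * b) + b * x ^ b) / (x ^ b) ^ 2) x := by
      intro x hx
      rw [hg]
      have a1 : HasDerivAt (fun x : ℝ => x ^ (1 - 2 * b)) ((1 - 2 * b) / (x ^ b) ^ 2) x := by
        refine (Real.hasDerivAt_rpow_const (Or.inl hx.ne')).congr_deriv ?_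
        rw [Real.rpow_sub hx, Real.rpow_one, hx1 x hx]
        have := (Real.rpow_pos_of_pos hx b).ne'
        field_simp
      refine ((a1.const_mul (4 / (B * b))).mul (hPd x hx).exp).congr_deriv ?_
      rw [hx1 x hx]
      have := (Real.rpow_pos_of_pos hx b).ne'
      field_simp
    have hGd : ∀ x, 0 < x → HasDerivAt (modelG B) (-(1 / modelg B x)) x := by
      intro x hx
      rw [hG, hg]
      have a1 := ((hPd x hx).add_const 1).const_mul (B/4)
      have a2 := (hPd x hx).neg.exp
      refine (a1.mul a2).congr_deriv ?_
      simp only [hx1 x hx, Pi.neg_apply]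
      rw [Real.exp_neg]
      have := (Real.rpow_pos_of_pos hx b).ne'
      field_simp
      ring
    have hGpos : ∀ x, 0 < x → 0 < modelG B x := by
      intro x hx
      have := (Real.rpow_pos_of_pos hx b)
      rw [hG]; positivity
    have hdd : ∀ x, 0 < x → deriv (modelg B) x = (1 - mgr B (x ^ b)) / modelG B x := by
      intro x hx
      rw [(hgd x hx).deriv, eq_div_iff (hGpos x hx).ne', hG]
      simp only [mgr]
      rw [Real.exp_neg]
      have := (Real.rpow_pos_of_pos hx b).ne'
      field_simp
      linear_combination (-(x^b) - 1) * hBb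
    refine ⟨?_, ?_, ?_⟩
    · rw [hG]; simp only [hP]
    · rw [hdd s hs0, hP, div_mul_cancel₀ _ (hGpos _ hs0).ne']
    · have := invB2_gen (B := B) hB (g := modelg B) (G := modelG B) (P := fun x => x ^ b)
        (s := s) (P' := b * s ^ b / s) (by simp only [hP]; exact hρ)
        (by rw [hg]; positivity) (hGpos _ hs0)
        (by filter_upwards [lt_mem_nhds hs0] with x hx using hdd x hx)
        (hPd s hs0) (hGd s hs0) (by
          rw [hG, hg]
          simp only [hx1 s hs0]
          rw [Real.exp_neg]
          have := (Real.rpow_pos_of_pos hs0 b).ne'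
          field_simp)
      rw [this]
      simp only [hP]


noncomputable def Nv (B r p0 m0 mφ φ ψ : ℝ) : ℝ :=
  -(1 / (B * r)) * (Real.exp φ - 1 - φ) + (mφ - m0) * (p0 + ψ) ^ 2 + m0 * ψ ^ 2

noncomputable def Xl (B κ r w p0 m0 a Q : ℝ) : ℝ :=
  r * w * ((2 * m0 * p0 - 2 / (B * r)) * (Q / w) + 2 * m0 * p0 * κ * a / r
    + (κ - κ ^ 2) * a / r ^ 2)

lemma exp_sub_lip {h φ φ' : ℝ} (hh : h ≤ 1) (h1 : |φ| ≤ h) (h2 : |φ'| ≤ h) :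
    |(Real.exp φ - 1 - φ) - (Real.exp φ' - 1 - φ')| ≤ 2 * h * |φ - φ'| := by
  have hd : ∀ s : ℝ, HasDerivAt (fun s => Real.exp s - 1 - s) (Real.exp s - 1) s := by
    intro s
    exact ((Real.hasDerivAt_exp s).sub_const 1).fun_sub (hasDerivAt_id s)
  have := Convex.norm_image_sub_le_of_norm_hasDerivWithin_le (C := 2 * h)
    (f := fun s => Real.exp s - 1 - s) (f' := fun s => Real.exp s - 1) (s := Set.Icc (-h) h)
    (x := φ') (y := φ)
    (fun s _ => (hd s).hasDerivWithinAt) (by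
      intro s hs
      have hs' : |s| ≤ h := abs_le.2 hs
      have := Real.abs_exp_sub_one_le (hs'.trans hh)
      rw [Real.norm_eq_abs]; linarith) (convex_Icc _ _) (abs_le.1 h2) (abs_le.1 h1)
  simpa [Real.norm_eq_abs] using this

set_option maxHeartbeats 1000000 in
lemma N_lip_core {sB x ν p0 m0 Δ φ φ' ψ ψ' : ℝ} {M : ℝ → ℝ} (hB : 1 ≤ sB) (hx : 1 ≤ x) (hν0 : 0 < ν)
    (hν : ν ≤ 1 / 128) (hp0 : 0 ≤ p0) (hp1 : p0 ≤ 1) (hm0 : |m0| ≤ 2 / x ^ 2)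
    (hM : ∀ φ φ', |φ| ≤ 1 → |φ'| ≤ 1 → |M φ - M φ'| ≤ 8 / x ^ 4 * |φ - φ'|) (hM0 : M 0 = m0)
    (hx0 : 0 < x) (hs0 : 0 < sB) (hΔ0 : 0 ≤ Δ) (bφ : |φ| ≤ 2 * ν / x) (bφ' : |φ'| ≤ 2 * ν / x)
    (h2ν : 2 * ν / x ≤ 1) (bψ : |ψ| ≤ 3 * ν / x ^ 2) (bψ' : |ψ'| ≤ 3 * ν / x ^ 2)
    (h3ν : 3 * ν / x ^ 2 ≤ 1) (dψ : |ψ - ψ'| ≤ 2 * Δ / x) (dφ' : |φ - φ'| ≤ Δ) :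
    |x ^ 2 * (sB * x) * Nv (sB ^ 2) (x ^ 2) p0 m0 (M φ) φ ψ
      - x ^ 2 * (sB * x) * Nv (sB ^ 2) (x ^ 2) p0 m0 (M φ') φ' ψ'| ≤
      (4 * ν + 200 * sB / x) * Δ := by
  -- the four terms
  have T1 : |(Real.exp φ - 1 - φ) - (Real.exp φ' - 1 - φ')| ≤ 4 * ν / x * Δ := by
    refine (exp_sub_lip h2ν bφ bφ').trans ?_
    have : 2 * (2 * ν / x) = 4 * ν / x := by ring
    rw [this]
    exact mul_le_mul_of_nonneg_left dφ' (by positivity)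
  have bψ1 := bψ.trans h3ν
  have bψ1' := bψ'.trans h3ν
  have T2 : |(M φ - M φ') * (p0 + ψ) ^ 2| ≤ 32 / x ^ 4 * Δ := by
    rw [abs_mul]
    have e1 := (hM φ φ' (bφ.trans h2ν) (bφ'.trans h2ν)).trans
      (mul_le_mul_of_nonneg_left dφ' (by positivity))
    have e2 : |(p0 + ψ) ^ 2| ≤ 4 := by
      rw [abs_of_nonneg (sq_nonneg _)]
      have := abs_le.1 bψ1
      nlinarith
    calc _ ≤ (8 / x ^ 4 * Δ) * 4 := mul_le_mul e1 e2 (abs_nonneg _) (by positivity)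
      _ = _ := by ring
  have hx45 : ∀ c : ℝ, 0 ≤ c → c / x ^ 5 ≤ c / x ^ 4 := by
    intro c hc
    exact div_le_div_of_nonneg_left hc (by positivity) (pow_le_pow_right₀ hx (by norm_num))
  have T3 : |(M φ' - m0) * ((ψ - ψ') * (2 * p0 + ψ + ψ'))| ≤ 64 / x ^ 4 * Δ := by
    rw [abs_mul, abs_mul, ← hM0]
    have e1 := (hM φ' 0 (bφ'.trans h2ν) (by simp))
    rw [sub_zero] at e1
    have e1' : |M φ' - M 0| ≤ 8 / x ^ 4 := e1.trans
      (mul_le_of_le_one_right (by positivity) (bφ'.trans h2ν))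
    have e2 : |2 * p0 + ψ + ψ'| ≤ 4 := by
      have := abs_le.1 bψ1
      have := abs_le.1 bψ1'
      rw [abs_le]; constructor <;> linarith
    calc _ ≤ (8 / x ^ 4) * ((2 * Δ / x) * 4) :=
          mul_le_mul e1' (mul_le_mul dψ e2 (abs_nonneg _) (by positivity)) (by positivity)
            (by positivity)
      _ = 64 / x ^ 5 * Δ := by field_simp; ring
      _ ≤ _ := mul_le_mul_of_nonneg_right (hx45 64 (by norm_num)) hΔ0
  have T4 : |m0 * ((ψ - ψ') * (ψ + ψ'))| ≤ 24 / x ^ 4 * Δ := by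
    rw [abs_mul, abs_mul]
    have e2 : |ψ + ψ'| ≤ 6 / x ^ 2 := by
      refine (abs_add_le _ _).trans ?_
      have : 3 * ν / x ^ 2 ≤ 3 / x ^ 2 := div_le_div_of_nonneg_right (by linarith) (by positivity)
      calc |ψ| + |ψ'| ≤ 3 / x ^ 2 + 3 / x ^ 2 := by linarith
        _ = _ := by ring
    calc _ ≤ (2 / x ^ 2) * ((2 * Δ / x) * (6 / x ^ 2)) :=
          mul_le_mul hm0 (mul_le_mul dψ e2 (abs_nonneg _) (by positivity)) (by positivity)
            (by positivity)
      _ = 24 / x ^ 5 * Δ := by field_simp; ring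
      _ ≤ _ := mul_le_mul_of_nonneg_right (hx45 24 (by norm_num)) hΔ0
  have split : x ^ 2 * (sB * x) * Nv (sB ^ 2) (x ^ 2) p0 m0 (M φ) φ ψ
      - x ^ 2 * (sB * x) * Nv (sB ^ 2) (x ^ 2) p0 m0 (M φ') φ' ψ' =
      -(x / sB) * ((Real.exp φ - 1 - φ) - (Real.exp φ' - 1 - φ')) +
      sB * x ^ 3 * ((M φ - M φ') * (p0 + ψ) ^ 2 + (M φ' - m0) * ((ψ - ψ') * (2 * p0 + ψ + ψ'))
        + m0 * ((ψ - ψ') * (ψ + ψ'))) := by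
    unfold Nv
    field_simp
    ring
  rw [split]
  refine (abs_add_le _ _).trans ?_
  have A1 : |-(x / sB) * ((Real.exp φ - 1 - φ) - (Real.exp φ' - 1 - φ'))| ≤ 4 * ν * Δ := by
    rw [abs_mul, abs_neg, abs_of_pos (by positivity : 0 < x / sB)]
    calc _ ≤ x * (4 * ν / x * Δ) := mul_le_mul (div_le_self hx0.le hB) T1 (abs_nonneg _) hx0.le
      _ = _ := by field_simp
  have A2 : |sB * x ^ 3 * ((M φ - M φ') * (p0 + ψ) ^ 2 + (M φ' - m0) * ((ψ - ψ') * (2 * p0 + ψ + ψ'))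
        + m0 * ((ψ - ψ') * (ψ + ψ')))| ≤ 200 * sB / x * Δ := by
    rw [abs_mul, abs_of_pos (by positivity : 0 < sB * x ^ 3)]
    have : |(M φ - M φ') * (p0 + ψ) ^ 2 + (M φ' - m0) * ((ψ - ψ') * (2 * p0 + ψ + ψ'))
        + m0 * ((ψ - ψ') * (ψ + ψ'))| ≤ 200 / x ^ 4 * Δ := by
      refine (abs_add_three _ _ _).trans ?_
      have : 32 / x ^ 4 * Δ + 64 / x ^ 4 * Δ + 24 / x ^ 4 * Δ ≤ 200 / x ^ 4 * Δ := by
        have : 0 ≤ Δ / x ^ 4 := by positivity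
        have e : ∀ c : ℝ, c / x ^ 4 * Δ = c * (Δ / x ^ 4) := fun c => by ring
        rw [e, e, e, e]; linarith
      linarith
    calc _ ≤ sB * x ^ 3 * (200 / x ^ 4 * Δ) := mul_le_mul_of_nonneg_left this (by positivity)
      _ = _ := by field_simp
  calc _ ≤ 4 * ν * Δ + 200 * sB / x * Δ := add_le_add A1 A2
    _ = _ := by ring

lemma N_lip {sB x ν p0 m0 κ : ℝ} {M : ℝ → ℝ} (hB : 1 ≤ sB) (hx : 1 ≤ x) (hν0 : 0 < ν)
    (hν : ν ≤ 1 / 128) (hp0 : 0 ≤ p0) (hp1 : p0 ≤ 1) (hm0 : |m0| ≤ 2 / x ^ 2)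
    (hM : ∀ φ φ', |φ| ≤ 1 → |φ'| ≤ 1 → |M φ - M φ'| ≤ 8 / x ^ 4 * |φ - φ'|) (hM0 : M 0 = m0)
    (hκ0 : 0 ≤ κ) (hκ1 : κ ≤ 5 / 4) {D a Q a' Q' : ℝ} (hD : |D| ≤ ν / x) (ha : |a| ≤ ν / x)
    (ha' : |a'| ≤ ν / x) (hQ : |Q| ≤ ν / x) (hQ' : |Q'| ≤ ν / x) :
    |x ^ 2 * (sB * x) * Nv (sB ^ 2) (x ^ 2) p0 m0 (M (D + a)) (D + a) (Q / (sB * x) + κ * a / x ^ 2)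
      - x ^ 2 * (sB * x) * Nv (sB ^ 2) (x ^ 2) p0 m0 (M (D + a')) (D + a')
        (Q' / (sB * x) + κ * a' / x ^ 2)| ≤
      (4 * ν + 200 * sB / x) * (|a - a'| + |Q - Q'|) := by
  have hx0 : 0 < x := by linarith
  have hs0 : 0 < sB := by linarith
  set Δ := |a - a'| + |Q - Q'| with hΔ
  have hΔ0 : 0 ≤ Δ := by positivity
  have hνx : ν / x ≤ ν := div_le_self hν0.le hx
  set φ := D + a with hφ
  set φ' := D + a' with hφ'
  have bφ : |φ| ≤ 2 * ν / x := by
    have := abs_add_le D a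
    calc |φ| ≤ |D| + |a| := this
      _ ≤ ν / x + ν / x := by linarith
      _ = _ := by ring
  have bφ' : |φ'| ≤ 2 * ν / x := by
    have := abs_add_le D a'
    calc |φ'| ≤ |D| + |a'| := this
      _ ≤ ν / x + ν / x := by linarith
      _ = _ := by ring
  have h2ν : 2 * ν / x ≤ 1 := by rw [div_le_one hx0]; linarith
  have key : ∀ a Q : ℝ, |Q / (sB * x) + κ * a / x ^ 2| ≤ (|Q| + (5/4) * |a|) / x := by
    intro a Q
    have h1 : |Q / (sB * x)| ≤ |Q| / x := by
      rw [abs_div, abs_of_pos (by positivity : 0 < sB * x)]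
      apply div_le_div_of_nonneg_left (abs_nonneg _) hx0
      nlinarith
    have h2 : |κ * a / x ^ 2| ≤ (5/4) * |a| / x := by
      rw [abs_div, abs_mul, abs_of_nonneg hκ0, abs_of_pos (by positivity : 0 < x ^ 2)]
      apply div_le_div₀ (by positivity) _ hx0 (by nlinarith)
      exact mul_le_mul_of_nonneg_right hκ1 (abs_nonneg _)
    calc _ ≤ _ := abs_add_le _ _
      _ ≤ |Q| / x + (5/4) * |a| / x := add_le_add h1 h2
      _ = _ := by ring
  set ψ := Q / (sB * x) + κ * a / x ^ 2 with hψ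
  set ψ' := Q' / (sB * x) + κ * a' / x ^ 2 with hψ'
  have bψ : |ψ| ≤ 3 * ν / x ^ 2 := by
    refine (key a Q).trans ?_
    rw [div_le_div_iff₀ hx0 (by positivity)]
    have e1 : |Q| * x ≤ ν := by rwa [le_div_iff₀ hx0] at hQ
    have e2 : |a| * x ≤ ν := by rwa [le_div_iff₀ hx0] at ha
    nlinarith
  have bψ' : |ψ'| ≤ 3 * ν / x ^ 2 := by
    refine (key a' Q').trans ?_
    rw [div_le_div_iff₀ hx0 (by positivity)]
    have e1 : |Q'| * x ≤ ν := by rwa [le_div_iff₀ hx0] at hQ'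
    have e2 : |a'| * x ≤ ν := by rwa [le_div_iff₀ hx0] at ha'
    nlinarith
  have h3ν : 3 * ν / x ^ 2 ≤ 1 := by rw [div_le_one (by positivity)]; nlinarith
  have dψ : |ψ - ψ'| ≤ 2 * Δ / x := by
    have : ψ - ψ' = (Q - Q') / (sB * x) + κ * (a - a') / x ^ 2 := by rw [hψ, hψ']; ring
    rw [this]
    refine (key (a - a') (Q - Q')).trans ?_
    apply div_le_div_of_nonneg_right _ hx0.le
    rw [hΔ]; linarith [abs_nonneg (a - a'), abs_nonneg (Q - Q')]
  have dφ : φ - φ' = a - a' := by rw [hφ, hφ']; ring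
  have dφ' : |φ - φ'| ≤ Δ := by rw [dφ, hΔ]; linarith [abs_nonneg (Q - Q')]
  exact N_lip_core hB hx hν0 hν hp0 hp1 hm0 hM hM0 hx0 hs0 hΔ0 bφ bφ' h2ν bψ bψ' h3ν dψ dφ'

lemma N_zero {sB x p0 m0 mD D : ℝ} (hB : 1 ≤ sB) (hx : 1 ≤ x)
    (hp0 : 0 ≤ p0) (hp1 : p0 ≤ 1)
    (hM : |mD - m0| ≤ 8 / x ^ 4 * |D|) (hD : |D| ≤ 1 / x) :
    |x ^ 2 * (sB * x) * Nv (sB ^ 2) (x ^ 2) p0 m0 mD D 0| ≤ 9 * sB * |D| := by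
  have hx0 : 0 < x := by linarith
  have hs0 : 0 < sB := by linarith
  have hD1 : |D| ≤ 1 := hD.trans (by rw [div_le_one hx0]; exact hx)
  have split : x ^ 2 * (sB * x) * Nv (sB ^ 2) (x ^ 2) p0 m0 mD D 0 =
      -(x / sB) * (Real.exp D - 1 - D) + sB * x ^ 3 * ((mD - m0) * p0 ^ 2) := by
    unfold Nv
    field_simp
    ring
  rw [split]
  refine (abs_add_le _ _).trans ?_
  have A1 : |-(x / sB) * (Real.exp D - 1 - D)| ≤ sB * |D| := by
    rw [abs_mul, abs_neg, abs_of_pos (by positivity : 0 < x / sB)]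
    have h1 := Real.abs_exp_sub_one_sub_id_le hD1
    have h2 : x * D ^ 2 ≤ |D| := by
      rw [← sq_abs]
      have : |D| * x ≤ 1 := by rwa [le_div_iff₀ hx0] at hD
      nlinarith [abs_nonneg D]
    calc _ ≤ x * D ^ 2 := mul_le_mul (div_le_self hx0.le hB) h1 (abs_nonneg _) hx0.le
      _ ≤ |D| := h2
      _ ≤ _ := le_mul_of_one_le_left (abs_nonneg _) hB
  have A2 : |sB * x ^ 3 * ((mD - m0) * p0 ^ 2)| ≤ 8 * sB * |D| := by
    rw [abs_mul, abs_of_pos (by positivity : 0 < sB * x ^ 3), abs_mul]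
    have h1 : |p0 ^ 2| ≤ 1 := by
      rw [abs_of_nonneg (sq_nonneg _)]; nlinarith
    calc _ ≤ sB * x ^ 3 * ((8 / x ^ 4 * |D|) * 1) := by
          apply mul_le_mul_of_nonneg_left _ (by positivity)
          exact mul_le_mul hM h1 (abs_nonneg _) (by positivity)
      _ = 8 * sB * |D| / x := by field_simp
      _ ≤ _ := div_le_self (by positivity) hx
  linarith

lemma Xl_bound {sB x p0 m0 κ : ℝ} (hB : 1 ≤ sB) (hx : 1 ≤ x)
    (hp0 : 0 ≤ p0) (hp1 : p0 ≤ 1) (hm0 : |m0| ≤ 2 / x ^ 2)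
    (hm1 : |x ^ 2 * (2 * m0 * p0 - 2 / (sB ^ 2 * x ^ 2))| ≤ 1 / 128)
    (hκ0 : 0 ≤ κ) (hκ1 : κ ≤ 5 / 4) (a Q : ℝ) :
    |Xl (sB ^ 2) κ (x ^ 2) (sB * x) p0 m0 a Q| ≤ (1 / 128 + 6 * sB / x) * (|a| + |Q|) := by
  have hx0 : 0 < x := by linarith
  have hs0 : 0 < sB := by linarith
  have split : Xl (sB ^ 2) κ (x ^ 2) (sB * x) p0 m0 a Q =
      (x ^ 2 * (2 * m0 * p0 - 2 / (sB ^ 2 * x ^ 2))) * Q +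
      sB * x * ((2 * m0 * (p0 * κ) + (κ - κ ^ 2) / x ^ 2) * a) := by
    unfold Xl
    field_simp
    ring
  rw [split]
  refine (abs_add_le _ _).trans ?_
  have A1 : |(x ^ 2 * (2 * m0 * p0 - 2 / (sB ^ 2 * x ^ 2))) * Q| ≤ 1 / 128 * |Q| := by
    rw [abs_mul]; exact mul_le_mul_of_nonneg_right hm1 (abs_nonneg _)
  have A2 : |sB * x * ((2 * m0 * (p0 * κ) + (κ - κ ^ 2) / x ^ 2) * a)| ≤ 6 * sB / x * |a| := by
    rw [abs_mul, abs_of_pos (by positivity : 0 < sB * x), abs_mul]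
    have h1 : |2 * m0 * (p0 * κ) + (κ - κ ^ 2) / x ^ 2| ≤ 6 / x ^ 2 := by
      refine (abs_add_le _ _).trans ?_
      have e1 : |2 * m0 * (p0 * κ)| ≤ 5 / x ^ 2 := by
        rw [abs_mul, abs_mul, abs_of_nonneg (by positivity : 0 ≤ p0 * κ), abs_two]
        have : p0 * κ ≤ 5 / 4 := by nlinarith
        calc _ ≤ 2 * (2 / x ^ 2) * (5 / 4) := by
              apply mul_le_mul _ this (by positivity) (by positivity)
              linarith
          _ = _ := by ring
      have e2 : |(κ - κ ^ 2) / x ^ 2| ≤ 1 / x ^ 2 := by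
        rw [abs_div, abs_of_pos (by positivity : 0 < x ^ 2)]
        apply div_le_div_of_nonneg_right _ (by positivity)
        rw [abs_le]; constructor <;> nlinarith
      calc _ ≤ 5 / x ^ 2 + 1 / x ^ 2 := add_le_add e1 e2
        _ = _ := by ring
    calc _ ≤ sB * x * (6 / x ^ 2 * |a|) := by
          apply mul_le_mul_of_nonneg_left _ (by positivity)
          exact mul_le_mul_of_nonneg_right h1 (abs_nonneg _)
      _ = _ := by field_simp
  have e3 : 0 ≤ 6 * sB / x * |Q| := by positivity
  have e4 := abs_nonneg a
  calc _ ≤ 1 / 128 * |Q| + 6 * sB / x * |a| := add_le_add A1 A2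
    _ ≤ _ := by
      have : (1 / 128 + 6 * sB / x) * (|a| + |Q|) =
        1 / 128 * |Q| + 6 * sB / x * |a| + 1 / 128 * |a| + 6 * sB / x * |Q| := by ring
      rw [this]; linarith


noncomputable def clp (b a : ℝ) : ℝ := max (-b) (min b a)

lemma clp_abs {b : ℝ} (hb : 0 ≤ b) (a : ℝ) : |clp b a| ≤ b := by
  unfold clp
  rw [abs_le]
  exact ⟨le_max_left _ _, max_le (by linarith) (min_le_left _ _)⟩

lemma clp_lip (b a a' : ℝ) : |clp b a - clp b a'| ≤ |a - a'| := by
  unfold clp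
  refine (abs_max_sub_max_le_max _ _ _ _).trans ?_
  refine max_le (by simp) ?_
  refine (abs_min_sub_min_le_max _ _ _ _).trans ?_
  exact max_le (by simp) le_rfl

lemma clp_eq {b a : ℝ} (h : |a| ≤ b) : clp b a = a := by
  unfold clp
  rw [abs_le] at h
  rw [min_eq_right h.2, max_eq_right h.1]

lemma clp_zero {b : ℝ} (hb : 0 ≤ b) : clp b 0 = 0 := clp_eq (by simpa using hb)

/-- full right-hand side -/
noncomputable def Xf (B κ r w p0 m0 mφ D D' a Q ca cQ : ℝ) : ℝ :=
  Xl B κ r w p0 m0 a Q + r * w * Nv B r p0 m0 mφ (D + ca) (cQ / w + κ * ca / r) + w * κ * D'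

lemma Xf_cont {T : Type*} [TopologicalSpace T] {s : Set T} (B κ : ℝ) (hB : B ≠ 0)
    {r w p0 m0 mφ D D' a Q ca cQ : T → ℝ}
    (hr : ContinuousOn r s) (hw : ContinuousOn w s) (hp0 : ContinuousOn p0 s)
    (hm0 : ContinuousOn m0 s) (hmφ : ContinuousOn mφ s) (hD : ContinuousOn D s)
    (hD' : ContinuousOn D' s) (ha : ContinuousOn a s) (hQ : ContinuousOn Q s)
    (hca : ContinuousOn ca s) (hcQ : ContinuousOn cQ s)
    (hr0 : ∀ t ∈ s, r t ≠ 0) (hw0 : ∀ t ∈ s, w t ≠ 0) :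
    ContinuousOn (fun t => Xf B κ (r t) (w t) (p0 t) (m0 t) (mφ t) (D t) (D' t) (a t) (Q t)
      (ca t) (cQ t)) s := by
  unfold Xf Xl Nv
  have h1 : ∀ t ∈ s, B * r t ≠ 0 := fun t ht => mul_ne_zero hB (hr0 t ht)
  have h2 : ∀ t ∈ s, r t ^ 2 ≠ 0 := fun t ht => pow_ne_zero _ (hr0 t ht)
  fun_prop (disch := assumption)

lemma psi_alg {B κ r w p0 m0 mφ D D' a Q φ ψ : ℝ} (hB : B ≠ 0) (hr : r ≠ 0) (hw : w ≠ 0)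
    (hw2 : w ^ 2 = B * r) (hκ : κ = 1 / 4 + 1 / B) (hφ : φ = D + a)
    (hψ : ψ = Q / w + κ * a / r)
    (hid : m0 * p0 ^ 2 = 1 / r ^ 2 + 1 / (B * r) + D / (B * r)) :
    ((κ * Q / r - a / w + Xf B κ r w p0 m0 mφ D D' a Q a Q / r) * w - Q * (w / (2 * r))) / w ^ 2
      + (κ * (κ * a / r + Q / w - D') * r - κ * a * 1) / r ^ 2 =
    mφ * (p0 + ψ) ^ 2 - 1 / r ^ 2 - Real.exp φ / (B * r) := by
  have hrhs : mφ * (p0 + ψ) ^ 2 - 1 / r ^ 2 - Real.exp φ / (B * r) =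
      Nv B r p0 m0 mφ φ ψ + 2 * m0 * p0 * ψ - a / w ^ 2 := by
    have : mφ * (p0 + ψ) ^ 2 - 1 / r ^ 2 - Real.exp φ / (B * r) =
      Nv B r p0 m0 mφ φ ψ + 2 * m0 * p0 * ψ + (m0 * p0 ^ 2 - 1 / r ^ 2) - (1 + φ) / (B * r) := by
      unfold Nv; ring
    rw [this, hid, hφ, hw2]; ring
  rw [hrhs]
  have hX : Xf B κ r w p0 m0 mφ D D' a Q a Q = Xl B κ r w p0 m0 a Q + r * w * Nv B r p0 m0 mφ φ ψ
      + w * κ * D' := by rw [hφ, hψ]; rfl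
  rw [hX]
  generalize Nv B r p0 m0 mφ φ ψ = N
  unfold Xl
  rw [hψ]
  have h2 : 2 * κ - 1 / 2 - 2 / B = 0 := by rw [hκ]; ring
  have : ∀ E : ℝ, E = Q / (r * w) * (2 * κ - 1 / 2 - 2 / B) + (N + 2 * m0 * p0 * (Q / w + κ * a / r) - a / w ^ 2) → E = N + 2 * m0 * p0 * (Q / w + κ * a / r) - a / w ^ 2 := by
    intro E hE; rw [hE, h2]; ring
  apply this
  field_simp
  ring


lemma Xf_lip {sB x κ p0 m0 D D' a Q a' Q' : ℝ} {M : ℝ → ℝ} (hB : 1 ≤ sB) (hx : 1 ≤ x)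
    (hp0 : 0 ≤ p0) (hp1 : p0 ≤ 1) (hm0 : |m0| ≤ 2 / x ^ 2)
    (hm1 : |x ^ 2 * (2 * m0 * p0 - 2 / (sB ^ 2 * x ^ 2))| ≤ 1 / 128)
    (hM : ∀ φ φ', |φ| ≤ 1 → |φ'| ≤ 1 → |M φ - M φ'| ≤ 8 / x ^ 4 * |φ - φ'|) (hM0 : M 0 = m0)
    (hκ0 : 0 ≤ κ) (hκ1 : κ ≤ 5 / 4) (hD : |D| ≤ (1 / 128) / x)
    (hbig : 206 * sB / x ≤ 1 / 64) :
    |Xf (sB ^ 2) κ (x ^ 2) (sB * x) p0 m0 (M (D + clp ((1 / 128) / x) a)) D D' a Q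
        (clp ((1 / 128) / x) a) (clp ((1 / 128) / x) Q)
      - Xf (sB ^ 2) κ (x ^ 2) (sB * x) p0 m0 (M (D + clp ((1 / 128) / x) a')) D D' a' Q'
        (clp ((1 / 128) / x) a') (clp ((1 / 128) / x) Q')| ≤ 1 / 16 * (|a - a'| + |Q - Q'|) := by
  have hx0 : 0 < x := by linarith
  have hb : (0 : ℝ) ≤ (1 / 128) / x := by positivity
  have h1 := N_lip (D := D) hB hx (by norm_num : (0 : ℝ) < 1 / 128) le_rfl hp0 hp1 hm0 hM hM0 hκ0 hκ1 hD
    (clp_abs hb a) (clp_abs hb a') (clp_abs hb Q) (clp_abs hb Q')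
  have h2 := Xl_bound hB hx hp0 hp1 hm0 hm1 hκ0 hκ1 (a - a') (Q - Q')
  have h3 := clp_lip ((1 / 128) / x) a a'
  have h4 := clp_lip ((1 / 128) / x) Q Q'
  have hlin : Xl (sB ^ 2) κ (x ^ 2) (sB * x) p0 m0 (a - a') (Q - Q') =
    Xl (sB ^ 2) κ (x ^ 2) (sB * x) p0 m0 a Q - Xl (sB ^ 2) κ (x ^ 2) (sB * x) p0 m0 a' Q' := by
    unfold Xl; ring
  rw [hlin] at h2
  unfold Xf
  have hΔ : 0 ≤ |a - a'| + |Q - Q'| := by positivity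
  have h5 : (4 * (1 / 128) + 200 * sB / x) * (|clp (1 / 128 / x) a - clp (1 / 128 / x) a'| + |clp (1 / 128 / x) Q - clp (1 / 128 / x) Q'|)
    ≤ (4 * (1 / 128) + 200 * sB / x) * (|a - a'| + |Q - Q'|) :=
    mul_le_mul_of_nonneg_left (add_le_add h3 h4) (by positivity)
  have h6 : (4 * (1 / 128) + 200 * sB / x) * (|a - a'| + |Q - Q'|) +
     (1 / 128 + 6 * sB / x) * (|a - a'| + |Q - Q'|) ≤ 1 / 16 * (|a - a'| + |Q - Q'|) := by
    rw [← add_mul]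
    apply mul_le_mul_of_nonneg_right _ hΔ
    have : 206 * sB / x = 200 * sB / x + 6 * sB / x := by ring
    linarith
  have h7 := (abs_add_le _ _).trans (add_le_add (h1.trans h5) h2)
  refine le_trans (le_of_eq ?_) (h7.trans h6)
  congr 1
  ring

lemma Xf_zero {sB x κ p0 m0 mD D D' E : ℝ} (hB : 1 ≤ sB) (hx : 1 ≤ x)
    (hp0 : 0 ≤ p0) (hp1 : p0 ≤ 1)
    (hM : |mD - m0| ≤ 8 / x ^ 4 * |D|) (hD : |D| ≤ 1 / x)
    (hκ0 : 0 ≤ κ) (hκ1 : κ ≤ 5 / 4) (hE : 0 ≤ E) (hDE : |D| ≤ 2 * sB ^ 2 * E)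
    (hDE' : |D'| ≤ 6 * sB ^ 2 * E / x ^ 2) :
    |Xf (sB ^ 2) κ (x ^ 2) (sB * x) p0 m0 mD D D' 0 0 0 0| + x ^ 2 * |D'| ≤ 32 * sB ^ 4 * E := by
  have hx0 : 0 < x := by linarith
  have hs0 : 0 < sB := by linarith
  have h1 := N_zero hB hx hp0 hp1 hM hD
  have e : Xf (sB ^ 2) κ (x ^ 2) (sB * x) p0 m0 mD D D' 0 0 0 0 =
     x ^ 2 * (sB * x) * Nv (sB ^ 2) (x ^ 2) p0 m0 mD D 0 + sB * x * κ * D' := by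
    unfold Xf Xl; simp
  rw [e]
  have h2 : x ^ 2 * |D'| ≤ 6 * sB ^ 2 * E := by
    rw [le_div_iff₀ (by positivity)] at hDE'; linarith
  have h3 : |sB * x * κ * D'| ≤ sB * (5 / 4) * (6 * sB ^ 2 * E) := by
    rw [abs_mul, abs_of_nonneg (by positivity : 0 ≤ sB * x * κ)]
    have : x * |D'| ≤ 6 * sB ^ 2 * E := by
      refine le_trans ?_ h2
      apply mul_le_mul_of_nonneg_right _ (abs_nonneg _)
      nlinarith
    calc _ = (sB * κ) * (x * |D'|) := by ring
      _ ≤ _ := mul_le_mul (mul_le_mul_of_nonneg_left hκ1 hs0.le) this (by positivity) (by positivity)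
  have h4 : 9 * sB * |D| ≤ 9 * sB * (2 * sB ^ 2 * E) := mul_le_mul_of_nonneg_left hDE (by positivity)
  have h5 := abs_add_le (x ^ 2 * (sB * x) * Nv (sB ^ 2) (x ^ 2) p0 m0 mD D 0) (sB * x * κ * D')
  have h6 : sB ^ 2 * E ≤ sB ^ 4 * E := by
    apply mul_le_mul_of_nonneg_right _ hE; exact pow_le_pow_right₀ hB (by norm_num)
  have h7 : sB ^ 3 * E ≤ sB ^ 4 * E := by
    apply mul_le_mul_of_nonneg_right _ hE; exact pow_le_pow_right₀ hB (by norm_num)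
  have h8 : 0 ≤ sB ^ 4 * E := by positivity
  nlinarith

theorem P5core (B r0 : ℝ) (hB : 1 ≤ B) (hr0 : 1 ≤ r0) (M : ℝ → ℝ → ℝ) (D D' e : ℝ → ℝ)
    (hMc : ContinuousOn (fun p : ℝ × ℝ => M p.1 p.2) (Set.Ici r0 ×ˢ Set.Icc (-1) 1))
    (hDc : ContinuousOn D (Set.Ici r0)) (hDc' : ContinuousOn D' (Set.Ici r0))
    (hDd : ∀ r, r0 < r → HasDerivAt D (D' r) r)
    (hm0 : ∀ r, r0 ≤ r → |M r 0| ≤ 2 / r)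
    (hm1 : ∀ r, r0 ≤ r → |r * (2 * M r 0 * (1 - 1 / r) - 2 / (B * r))| ≤ 1 / 128)
    (hM : ∀ r, r0 ≤ r → ∀ φ φ', |φ| ≤ 1 → |φ'| ≤ 1 → |M r φ - M r φ'| ≤ 8 / r ^ 2 * |φ - φ'|)
    (hid : ∀ r, r0 ≤ r → M r 0 * (1 - 1 / r) ^ 2 = 1 / r ^ 2 + 1 / (B * r) + D r / (B * r))
    (he0 : ∀ r, r0 ≤ r → 0 ≤ e r) (he : AntitoneOn e (Set.Ici r0))
    (hDe : ∀ r, r0 ≤ r → |D r| ≤ 2 * B * e r) (hDe' : ∀ r, r0 ≤ r → |D' r| ≤ 6 * B * e r / r)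
    (hbig : ∀ r, r0 ≤ r → 206 * √B / √r ≤ 1 / 64)
    (hsm : ∀ r, r0 ≤ r → 256 * B ^ 2 * e r ≤ (1 / 128) / √r) :
    ∃ φ ψ : ℝ → ℝ, ∀ r, r0 < r → HasDerivAt φ (ψ r) r ∧
      HasDerivAt ψ (M r (φ r) * (1 - 1 / r + ψ r) ^ 2 - 1 / r ^ 2 - Real.exp (φ r) / (B * r)) r ∧
      |φ r| ≤ 258 * B ^ 2 * e r ∧ |φ r| ≤ 1 := by
  set κ : ℝ := 1 / 4 + 1 / B with hκ
  have hB0 : 0 < B := by linarith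
  have hκ1 : κ ≤ 5 / 4 := by
    have : 1 / B ≤ 1 := by rw [div_le_one hB0]; exact hB
    linarith
  have hκ4 : 1 / 4 ≤ κ := by
    have : 0 ≤ 1 / B := by positivity
    linarith
  have hκ0 : 0 ≤ κ := by linarith
  have hsB : 1 ≤ √B := Real.one_le_sqrt.2 hB
  have hsB2 : √B ^ 2 = B := Real.sq_sqrt hB0.le
  have hrpos : ∀ r, r0 ≤ r → 0 < r := fun r h => by linarith
  have hx1 : ∀ r, r0 ≤ r → 1 ≤ √r := fun r h => Real.one_le_sqrt.2 (hr0.trans h)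
  have hx2 : ∀ r, r0 ≤ r → √r ^ 2 = r := fun r h => Real.sq_sqrt (hrpos r h).le
  have hx4 : ∀ r, r0 ≤ r → √r ^ 4 = r ^ 2 := fun r h => by
    rw [← hx2 r h]; rw [hx2 r h]; nth_rewrite 2 [← hx2 r h]; ring
  have hp0 : ∀ r, r0 ≤ r → 0 ≤ 1 - 1 / r := fun r h => by
    have : 1 / r ≤ 1 := by rw [div_le_one (hrpos r h)]; linarith
    linarith
  have hp1 : ∀ r, r0 ≤ r → 1 - 1 / r ≤ 1 := fun r h => by
    have : 0 ≤ 1 / r := by have := hrpos r h; positivity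
    linarith
  have hB2 : B ≤ B ^ 2 := by nlinarith
  have hDν : ∀ r, r0 ≤ r → |D r| ≤ (1 / 128) / √r := fun r h => by
    refine (hDe r h).trans (le_trans ?_ (hsm r h))
    have := mul_le_mul_of_nonneg_right hB2 (he0 r h)
    have h0 : 0 ≤ B ^ 2 * e r := mul_nonneg (by positivity) (he0 r h)
    nlinarith
  set ν : ℝ → ℝ := fun r => (1 / 128) / √r with hν
  have hν0 : ∀ r, 0 ≤ ν r := fun r => by rw [hν]; positivity
  have hν1 : ∀ r, r0 ≤ r → ν r ≤ 1 / 128 := fun r h => div_le_self (by norm_num) (hx1 r h)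
  set X : ℝ → ℝ → ℝ → ℝ := fun r a Q =>
    Xf B κ r (√B * √r) (1 - 1 / r) (M r 0) (M r (D r + clp (ν r) a)) (D r) (D' r) a Q
      (clp (ν r) a) (clp (ν r) Q) with hX
  have hXlip : ∀ r, r0 ≤ r → ∀ a Q a' Q', |X r a Q - X r a' Q'| ≤ 1 / 16 * (|a - a'| + |Q - Q'|) := by
    intro r h a Q a' Q'
    have := Xf_lip (κ := κ) (D := D r) (D' := D' r) (a := a) (Q := Q) (a' := a') (Q' := Q') (M := M r)
      (m0 := M r 0) hsB (hx1 r h) (hp0 r h) (hp1 r h)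
      (by rw [hx2 r h]; exact hm0 r h)
      (by rw [hx2 r h, hsB2]; exact hm1 r h)
      (by rw [hx4 r h]; exact hM r h) rfl hκ0 hκ1 (hDν r h) (hbig r h)
    rw [hx2 r h, hsB2] at this
    exact this
  set θ : ℝ → ℝ := fun r => 2 / B * (√B * √r) with hθ
  set Ψ : ℝ → ℂ → ℂ := fun r V => Complex.exp (Complex.I * θ r) *
    (-(r * D' r : ℝ) + Complex.I * (X r (Complex.exp (-(Complex.I * θ r)) * V).re
      (Complex.exp (-(Complex.I * θ r)) * V).im : ℝ)) with hΨ
  have hn1 : ∀ s : ℝ, ‖Complex.exp (Complex.I * s)‖ = 1 := fun s => by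
    rw [mul_comm]; exact Complex.norm_exp_ofReal_mul_I s
  have hn2 : ∀ s : ℝ, ‖Complex.exp (-(Complex.I * s))‖ = 1 := fun s => by
    have := hn1 (-s); push_cast at this; rw [mul_neg] at this; exact this
  have hL : ∀ r, r0 ≤ r → ∀ V V', ‖Ψ r V - Ψ r V'‖ ≤ 1 / 8 * ‖V - V'‖ := by
    intro r h V V'
    set ζ := Complex.exp (-(Complex.I * θ r)) * V with hζ
    set ζ' := Complex.exp (-(Complex.I * θ r)) * V' with hζ'
    have e1 : Ψ r V - Ψ r V' = Complex.exp (Complex.I * θ r) * (Complex.I *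
      ((X r ζ.re ζ.im - X r ζ'.re ζ'.im : ℝ) : ℂ)) := by
      simp only [hΨ]; push_cast; ring
    rw [e1, norm_mul, hn1, norm_mul, Complex.norm_I, one_mul, one_mul, Complex.norm_real,
      Real.norm_eq_abs]
    refine (hXlip r h _ _ _ _).trans ?_
    have e2 : ‖ζ - ζ'‖ = ‖V - V'‖ := by
      rw [hζ, hζ', ← mul_sub, norm_mul, hn2, one_mul]
    have e3 := Complex.abs_re_le_norm (ζ - ζ')
    have e4 := Complex.abs_im_le_norm (ζ - ζ')
    rw [Complex.sub_re] at e3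
    rw [Complex.sub_im] at e4
    linarith
  have h0 : ∀ r, r0 ≤ r → ‖Ψ r 0‖ ≤ 32 * B ^ 2 * e r := by
    intro r h
    have e1 : ‖Ψ r 0‖ ≤ r * |D' r| + |X r 0 0| := by
      simp only [hΨ]
      rw [norm_mul, hn1, one_mul]
      refine (norm_add_le _ _).trans ?_
      rw [norm_mul, Complex.norm_I, one_mul, norm_neg, Complex.norm_real, Complex.norm_real,
        Real.norm_eq_abs, Real.norm_eq_abs, abs_mul, abs_of_pos (hrpos r h)]
      simp
    have e2 := Xf_zero (κ := κ) (D := D r) (D' := D' r) (E := e r) (m0 := M r 0) (mD := M r (D r))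
      hsB (hx1 r h) (hp0 r h) (hp1 r h) (by
        have := hM r h (D r) 0 (((hDν r h).trans (hν1 r h)).trans (by norm_num)) (by simp)
        rw [hx4 r h]; simpa using this)
      ((hDν r h).trans (by
        apply div_le_div_of_nonneg_right (by norm_num) (by positivity))) hκ0 hκ1 (he0 r h)
      (by rw [hsB2]; exact hDe r h) (by rw [hsB2, hx2 r h]; exact hDe' r h)
    have e3 : √B ^ 4 = B ^ 2 := by
      rw [show (4 : ℕ) = 2 * 2 by norm_num, pow_mul, hsB2]
    rw [e3, hsB2, hx2 r h] at e2
    have e4 : X r 0 0 = Xf B κ r (√B * √r) (1 - 1 / r) (M r 0) (M r (D r)) (D r) (D' r) 0 0 0 0 := by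
      simp only [hX]; rw [clp_zero (hν0 r), add_zero]
    rw [e4] at e1
    linarith
  have hc : ContinuousOn (fun p : ℝ × ℂ => Ψ p.1 p.2) (Set.Ici r0 ×ˢ Set.univ) := by
    have c1 : ContinuousOn (fun p : ℝ × ℂ => p.1) (Set.Ici r0 ×ˢ (Set.univ : Set ℂ)) := continuousOn_fst
    have mt : Set.MapsTo (fun p : ℝ × ℂ => p.1) (Set.Ici r0 ×ˢ (Set.univ : Set ℂ)) (Set.Ici r0) :=
      fun p hp => hp.1
    have cθ : Continuous (fun p : ℝ × ℂ => θ p.1) := by simp only [hθ]; fun_prop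
    have cD : ContinuousOn (fun p : ℝ × ℂ => D p.1) (Set.Ici r0 ×ˢ (Set.univ : Set ℂ)) :=
      hDc.comp c1 mt
    have cD' : ContinuousOn (fun p : ℝ × ℂ => D' p.1) (Set.Ici r0 ×ˢ (Set.univ : Set ℂ)) :=
      hDc'.comp c1 mt
    have cζ : Continuous (fun p : ℝ × ℂ => Complex.exp (-(Complex.I * θ p.1)) * p.2) := by fun_prop
    have cr : Continuous (fun p : ℝ × ℂ => (Complex.exp (-(Complex.I * θ p.1)) * p.2).re) := by fun_prop
    have ci : Continuous (fun p : ℝ × ℂ => (Complex.exp (-(Complex.I * θ p.1)) * p.2).im) := by fun_prop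
    have cν : ContinuousOn (fun p : ℝ × ℂ => ν p.1) (Set.Ici r0 ×ˢ (Set.univ : Set ℂ)) := by
      simp only [hν]
      apply ContinuousOn.div continuousOn_const (by fun_prop)
      intro p hp
      have := hx1 p.1 hp.1
      positivity
    have ccr : ContinuousOn (fun p : ℝ × ℂ => clp (ν p.1) (Complex.exp (-(Complex.I * θ p.1)) * p.2).re) (Set.Ici r0 ×ˢ (Set.univ : Set ℂ)) :=
      cν.neg.sup (cν.inf cr.continuousOn)
    have cci : ContinuousOn (fun p : ℝ × ℂ => clp (ν p.1) (Complex.exp (-(Complex.I * θ p.1)) * p.2).im) (Set.Ici r0 ×ˢ (Set.univ : Set ℂ)) :=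
      cν.neg.sup (cν.inf ci.continuousOn)
    have cM : ∀ g : ℝ × ℂ → ℝ, ContinuousOn g (Set.Ici r0 ×ˢ (Set.univ : Set ℂ)) →
        (∀ p ∈ Set.Ici r0 ×ˢ (Set.univ : Set ℂ), |g p| ≤ 1) →
        ContinuousOn (fun p : ℝ × ℂ => M p.1 (g p)) (Set.Ici r0 ×ˢ (Set.univ : Set ℂ)) := by
      intro g hg hg1
      exact hMc.comp (c1.prodMk hg) (fun p hp => ⟨hp.1, abs_le.1 (hg1 p hp)⟩)
    have cX : ContinuousOn (fun p : ℝ × ℂ => X p.1 (Complex.exp (-(Complex.I * θ p.1)) * p.2).re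
      (Complex.exp (-(Complex.I * θ p.1)) * p.2).im) (Set.Ici r0 ×ˢ (Set.univ : Set ℂ)) := by
      simp only [hX]
      apply Xf_cont B κ hB0.ne' c1 (by fun_prop) _ (cM (fun _ => 0) continuousOn_const (by simp))
        (cM _ (cD.add ccr) _) cD cD' cr.continuousOn ci.continuousOn ccr cci
      · intro p hp; exact (hrpos p.1 hp.1).ne'
      · intro p hp
        have := hx1 p.1 hp.1
        positivity
      · apply continuousOn_const.sub
        apply continuousOn_const.div c1
        intro p hp; exact (hrpos p.1 hp.1).ne'
      · intro p hp
        have h1 := (hDν p.1 hp.1).trans (hν1 p.1 hp.1)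
        have h2 := (clp_abs (hν0 p.1) (Complex.exp (-(Complex.I * θ p.1)) * p.2).re).trans (hν1 p.1 hp.1)
        refine (abs_add_le _ _).trans ?_
        linarith
    simp only [hΨ]
    apply ContinuousOn.mul (by fun_prop)
    apply ContinuousOn.add
    · exact (Complex.continuous_ofReal.comp_continuousOn (c1.mul cD')).neg
    · exact continuousOn_const.mul (Complex.continuous_ofReal.comp_continuousOn cX)
  obtain ⟨V, hV, hVb⟩ := fixpt κ (1 / 8) r0 (by norm_num) (by linarith) (by linarith) Ψ
    (fun r => 32 * B ^ 2 * e r) hc hL h0 (by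
      intro a ha b hb hab
      exact mul_le_mul_of_nonneg_left (he ha hb hab) (by positivity))
  have hVb' : ∀ r, r0 ≤ r → ‖V r‖ ≤ 256 * B ^ 2 * e r := by
    intro r h
    refine (hVb r h).trans ?_
    have : 0 ≤ B ^ 2 * e r := mul_nonneg (by positivity) (he0 r h)
    rw [div_le_iff₀ (by linarith)]
    nlinarith
  set ζ : ℝ → ℂ := fun r => Complex.exp (-(Complex.I * θ r)) * V r with hζ
  have hζn : ∀ r, ‖ζ r‖ = ‖V r‖ := fun r => by simp only [hζ]; rw [norm_mul, hn2, one_mul]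
  have hab : ∀ r, r0 ≤ r → |(ζ r).re| ≤ 256 * B ^ 2 * e r := fun r h =>
    (Complex.abs_re_le_norm _).trans ((hζn r).le.trans (hVb' r h))
  have hQb : ∀ r, r0 ≤ r → |(ζ r).im| ≤ 256 * B ^ 2 * e r := fun r h =>
    (Complex.abs_im_le_norm _).trans ((hζn r).le.trans (hVb' r h))
  have hwd : ∀ r, r0 < r → HasDerivAt (fun r => √B * √r) ((√B * √r) / (2 * r)) r := by
    intro r h
    have h' := hrpos r h.le
    refine ((Real.hasDerivAt_sqrt h'.ne').const_mul (√B)).congr_deriv ?_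
    have := hx1 r h.le
    nth_rewrite 3 [← hx2 r h.le]
    field_simp
  have hθd : ∀ r, r0 < r → HasDerivAt θ (1 / (√B * √r)) r := by
    intro r h
    refine ((hwd r h).const_mul (2 / B)).congr_deriv ?_
    have := hx1 r h.le
    have h' := hrpos r h.le
    nth_rewrite 1 [← hsB2]
    nth_rewrite 2 [← hx2 r h.le]
    field_simp
  have hζd : ∀ r, r0 < r → HasDerivAt ζ (κ * ζ r / r - Complex.I * ζ r * ((1 / (√B * √r) : ℝ) : ℂ)
      + (-(D' r : ℝ) + Complex.I * ((X r (ζ r).re (ζ r).im / r : ℝ) : ℂ))) r := by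
    intro r h
    have h' := hrpos r h.le
    have hrc : (r : ℂ) ≠ 0 := by exact_mod_cast h'.ne'
    have d1 : HasDerivAt (fun r : ℝ => Complex.exp (-(Complex.I * θ r)))
      (Complex.exp (-(Complex.I * θ r)) * (-(Complex.I * ((1 / (√B * √r) : ℝ) : ℂ)))) r :=
      (((hθd r h).ofReal_comp.const_mul Complex.I).fun_neg).cexp
    refine (d1.fun_mul (hV r h)).congr_deriv ?_
    have e1 : Complex.exp (-(Complex.I * θ r)) * Complex.exp (Complex.I * θ r) = 1 := by
      rw [← Complex.exp_add]; simp
    have e2 : Complex.exp (-(Complex.I * θ r)) * Ψ r (V r) =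
        (-(r * D' r : ℝ) + Complex.I * (X r (ζ r).re (ζ r).im : ℝ)) := by
      simp only [hΨ]
      rw [← mul_assoc, e1, one_mul]
    have e3 : Complex.exp (-(Complex.I * θ r)) * ((κ * V r + Ψ r (V r)) / r) =
      (κ * ζ r + Complex.exp (-(Complex.I * θ r)) * Ψ r (V r)) / r := by
      simp only [hζ]; ring
    rw [e3, e2]
    have e4 : ζ r = Complex.exp (-(Complex.I * θ r)) * V r := rfl
    push_cast
    rw [← sub_eq_zero]
    have : Complex.exp (-(Complex.I * θ r)) * (-(Complex.I * (1 / (√B * √r)))) * V r =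
      -(Complex.I * ζ r * (1 / (√B * √r))) := by rw [e4]; ring
    rw [this]
    field_simp
    ring
  have hcl : ∀ r, r0 ≤ r → clp (ν r) (ζ r).re = (ζ r).re := fun r h =>
    clp_eq ((hab r h).trans (hsm r h))
  have hclQ : ∀ r, r0 ≤ r → clp (ν r) (ζ r).im = (ζ r).im := fun r h =>
    clp_eq ((hQb r h).trans (hsm r h))
  have had : ∀ r, r0 < r → HasDerivAt (fun r => (ζ r).re)
      (κ * (ζ r).re / r + (ζ r).im / (√B * √r) - D' r) r := by
    intro r h
    have := Complex.reCLM.hasFDerivAt.comp_hasDerivAt r (hζd r h)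
    refine this.congr_deriv ?_
    simp only [Complex.reCLM_apply, Complex.add_re, Complex.sub_re, Complex.neg_re,
      Complex.ofReal_re, Complex.I_mul_re, Complex.re_mul_ofReal, Complex.I_re]
    have : ((κ : ℂ) * ζ r / (r : ℂ)).re = κ * (ζ r).re / r := by
      rw [Complex.div_ofReal_re, Complex.re_ofReal_mul]
    rw [this]; ring
  have hQd : ∀ r, r0 < r → HasDerivAt (fun r => (ζ r).im)
      (κ * (ζ r).im / r - (ζ r).re / (√B * √r) + X r (ζ r).re (ζ r).im / r) r := by
    intro r h
    have := Complex.imCLM.hasFDerivAt.comp_hasDerivAt r (hζd r h)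
    refine this.congr_deriv ?_
    simp only [Complex.imCLM_apply, Complex.add_im, Complex.sub_im, Complex.neg_im,
      Complex.ofReal_re, Complex.I_mul_im, Complex.ofReal_im, Complex.im_mul_ofReal, Complex.I_im]
    have : ((κ : ℂ) * ζ r / (r : ℂ)).im = κ * (ζ r).im / r := by
      rw [Complex.div_ofReal_im, Complex.im_ofReal_mul]
    rw [this]; ring
  refine ⟨fun r => D r + (ζ r).re, fun r => (ζ r).im / (√B * √r) + κ * (ζ r).re / r, ?_⟩
  intro r h
  have h' := hrpos r h.le
  have hs1 := hx1 r h.le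
  refine ⟨?_, ?_, ?_, ?_⟩
  · refine ((hDd r h).fun_add (had r h)).congr_deriv ?_
    ring
  · have d := ((hQd r h).fun_div (hwd r h) (by positivity)).fun_add
      (((had r h).const_mul κ).fun_div (hasDerivAt_id r) h'.ne')
    refine d.congr_deriv ?_
    have hXe : X r (ζ r).re (ζ r).im = Xf B κ r (√B * √r) (1 - 1 / r) (M r 0)
      (M r (D r + (ζ r).re)) (D r) (D' r) (ζ r).re (ζ r).im (ζ r).re (ζ r).im := by
      simp only [hX]
      rw [hcl r h.le, hclQ r h.le]
    rw [hXe]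
    exact psi_alg hB0.ne' h'.ne' (by positivity) (by rw [mul_pow, hsB2, hx2 r h.le]) hκ rfl rfl
      (hid r h.le)
  · refine (abs_add_le _ _).trans ?_
    have e1 := hDe r h.le
    have e2 := hab r h.le
    have := mul_le_mul_of_nonneg_right hB2 (he0 r h.le)
    nlinarith
  · refine (abs_add_le _ _).trans ?_
    have e1 := (hDν r h.le).trans (hν1 r h.le)
    have e2 := ((hab r h.le).trans (hsm r h.le)).trans (hν1 r h.le)
    linarith


noncomputable def Y0 (B r : ℝ) : ℝ := r - 1 - Real.log (B * r / 4)

lemma Y0_hasDerivAt {B r : ℝ} (hB : 1 ≤ B) (hr : 0 < r) : HasDerivAt (Y0 B) (1 - 1 / r) r := by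
  have hB0 : 0 < B := by linarith
  have h1 : HasDerivAt (fun r : ℝ => B * r / 4) (B * 1 / 4) r :=
    ((hasDerivAt_id r).const_mul B).div_const 4
  refine (((hasDerivAt_id r).sub_const 1).fun_sub (h1.log (by positivity))).congr_deriv ?_
  field_simp

lemma Y0_div {B : ℝ} (hB : 1 ≤ B) : Tendsto (fun r => Y0 B r / r) atTop (nhds 1) := by
  have hB0 : 0 < B := by linarith
  have h1 : Tendsto (fun r : ℝ => Real.log r / r) atTop (nhds 0) :=
    Real.isLittleO_log_id_atTop.tendsto_div_nhds_zero
  have h2 : Tendsto (fun r : ℝ => (1 : ℝ) - r⁻¹ - (Real.log (B / 4) * r⁻¹ + Real.log r / r)) atTop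
      (nhds (1 - 0 - (Real.log (B / 4) * 0 + 0))) :=
    (tendsto_const_nhds.sub tendsto_inv_atTop_zero).sub
      ((tendsto_const_nhds.mul tendsto_inv_atTop_zero).add h1)
  have e : (1 : ℝ) - 0 - (Real.log (B / 4) * 0 + 0) = 1 := by ring
  rw [e] at h2
  refine h2.congr' ?_
  filter_upwards [eventually_gt_atTop 0] with r hr
  unfold Y0
  rw [show B * r / 4 = B / 4 * r by ring, Real.log_mul (by positivity) hr.ne']
  field_simp

lemma Y0_tendsto {B : ℝ} (hB : 1 ≤ B) : Tendsto (Y0 B) atTop atTop := by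
  have h := (Y0_div hB).pos_mul_atTop one_pos tendsto_id
  refine h.congr' ?_
  filter_upwards [eventually_gt_atTop 0] with r hr
  simp only [id]
  field_simp

theorem P5ev (B y0 r1 : ℝ) (hB : 1 ≤ B) (hy0 : 0 < y0) (m b2 e : ℝ → ℝ)
    (hm : ∀ y, y0 < y → HasDerivAt m (-(b2 y) / y ^ 2) y)
    (hb2c : ContinuousOn b2 (Set.Ioi y0))
    (hb2t : Tendsto b2 atTop (nhds (1 / B)))
    (hmt : Tendsto (fun y => y * m y) atTop (nhds (1 / B)))
    (he0 : ∀ r, r1 ≤ r → 0 ≤ e r) (he : AntitoneOn e (Set.Ici r1))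
    (hes : Tendsto (fun r => √r * e r) atTop (nhds 0))
    (h1 : ∀ r, r1 ≤ r → |Y0 B r * (m (Y0 B r) - mgr B (r - 1))| ≤ e r)
    (h2 : ∀ r, r1 ≤ r → |b2 (Y0 B r) + Y0 B r ^ 2 * (mgr' B (r - 1) * (r / (r - 1)))| ≤ e r) :
    ∃ r2 C : ℝ, ∃ φ ψ : ℝ → ℝ, r1 ≤ r2 ∧ 2 ≤ r2 ∧ 0 < C ∧ ∀ r, r2 < r →
      y0 + 1 < Y0 B r ∧ HasDerivAt φ (ψ r) r ∧
      HasDerivAt ψ (m (Y0 B r + φ r) * (1 - 1 / r + ψ r) ^ 2 - 1 / r ^ 2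
        - Real.exp (φ r) / (B * r)) r ∧
      |φ r| ≤ C * e r ∧ |φ r| ≤ 1 := by
  have hB0 : 0 < B := by linarith
  have hiB : 1 / B ≤ 1 := by rw [div_le_one hB0]; exact hB
  have hiB0 : 0 < 1 / B := by positivity
  have hYt := Y0_tendsto hB
  have hrm : Tendsto (fun r => r * m (Y0 B r)) atTop (nhds (1 / B)) := by
    have a1 := (hmt.comp hYt).div (Y0_div hB) one_ne_zero
    rw [div_one] at a1
    refine a1.congr' ?_
    filter_upwards [eventually_gt_atTop 0, hYt.eventually_gt_atTop 0] with r hr hy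
    simp only [Function.comp, Pi.div_apply]
    field_simp
  have hrm2 : Tendsto (fun r => r * (2 * m (Y0 B r) * (1 - 1 / r) - 2 / (B * r))) atTop (nhds 0) := by
    have a1 : Tendsto (fun r : ℝ => 2 * (r * m (Y0 B r)) * (1 - r⁻¹) - 2 / B) atTop
      (nhds (2 * (1 / B) * (1 - 0) - 2 / B)) :=
      ((hrm.const_mul 2).mul (tendsto_const_nhds.sub tendsto_inv_atTop_zero)).sub tendsto_const_nhds
    rw [show 2 * (1 / B) * (1 - 0) - 2 / B = 0 by ring] at a1
    refine a1.congr' ?_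
    filter_upwards [eventually_gt_atTop 0] with r hr
    field_simp
  obtain ⟨yb, hyb⟩ := eventually_atTop.1 (hb2t.abs.eventually_lt_const
    (show |1 / B| < 2 by rw [abs_of_pos hiB0]; linarith))
  have E1 := hrm.abs.eventually_lt_const (show |1 / B| < 2 by rw [abs_of_pos hiB0]; linarith)
  have E2 := hrm2.abs.eventually_lt_const (show |(0 : ℝ)| < 1 / 128 by norm_num)
  have E3 := (Y0_div hB).eventually_const_lt (show (3 / 4 : ℝ) < 1 by norm_num)
  have E4 : ∀ᶠ r : ℝ in atTop, 206 * √B / √r ≤ 1 / 64 := by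
    have : Tendsto (fun r : ℝ => 206 * √B / √r) atTop (nhds 0) :=
      tendsto_const_nhds.div_atTop Real.tendsto_sqrt_atTop
    filter_upwards [this.eventually_lt_const (show (0 : ℝ) < 1 / 64 by norm_num)] with r hr using hr.le
  have E5 : ∀ᶠ r : ℝ in atTop, 256 * B ^ 2 * e r ≤ (1 / 128) / √r := by
    have := hes.const_mul (256 * B ^ 2)
    rw [mul_zero] at this
    filter_upwards [this.eventually_lt_const (show (0 : ℝ) < 1 / 128 by norm_num),
      eventually_gt_atTop 0] with r hr hr0
    rw [le_div_iff₀ (Real.sqrt_pos.2 hr0)]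
    linarith
  obtain ⟨r2, hr2⟩ := eventually_atTop.1 (E1.and (E2.and (E3.and (E4.and (E5.and
    ((eventually_ge_atTop 4).and ((eventually_ge_atTop r1).and
      ((eventually_gt_atTop (2 * yb)).and ((hYt.eventually_gt_atTop (y0 + 1)).and
        (eventually_gt_atTop (2 * y0)))))))))))
  have F4 : ∀ r, r2 ≤ r → 4 ≤ r := fun r h => (hr2 r h).2.2.2.2.2.1
  have F1 : ∀ r, r2 ≤ r → r1 ≤ r := fun r h => (hr2 r h).2.2.2.2.2.2.1
  have Fyb : ∀ r, r2 ≤ r → 2 * yb < r := fun r h => (hr2 r h).2.2.2.2.2.2.2.1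
  have FY : ∀ r, r2 ≤ r → y0 + 1 < Y0 B r := fun r h => (hr2 r h).2.2.2.2.2.2.2.2.1
  have Fy0 : ∀ r, r2 ≤ r → 2 * y0 < r := fun r h => (hr2 r h).2.2.2.2.2.2.2.2.2
  have FYr : ∀ r, r2 ≤ r → 3 / 4 * r < Y0 B r := fun r h => by
    have := (hr2 r h).2.2.1
    rwa [lt_div_iff₀ (by linarith [F4 r h])] at this
  set d : ℝ → ℝ := fun r => m (Y0 B r) - mgr B (r - 1) with hd
  set d' : ℝ → ℝ := fun r => -(b2 (Y0 B r)) / Y0 B r ^ 2 * (1 - 1 / r) - mgr' B (r - 1) with hd'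
  have hdd : ∀ r, r2 ≤ r → HasDerivAt d (d' r) r := by
    intro r h
    have h4 := F4 r h
    have a1 := (hm (Y0 B r) (by linarith [FY r h])).comp r (Y0_hasDerivAt hB (by linarith : 0 < r))
    have a2 := (mgr_hasDerivAt hB (by linarith : 0 < r - 1)).comp r ((hasDerivAt_id r).sub_const 1)
    refine (a1.fun_sub a2).congr_deriv ?_
    simp only [hd']; ring
  have hdb : ∀ r, r2 ≤ r → |d r| ≤ 2 * e r / r := by
    intro r h
    have h4 := F4 r h
    have hY := FYr r h
    have a1 := h1 r (F1 r h)
    rw [abs_mul, abs_of_pos (by linarith)] at a1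
    rw [le_div_iff₀ (by linarith)]
    have : r * |d r| ≤ 2 * (Y0 B r * |d r|) := by nlinarith [abs_nonneg (d r)]
    linarith
  have hdb' : ∀ r, r2 ≤ r → |d' r| ≤ 4 * e r / r ^ 2 := by
    intro r h
    have h4 := F4 r h
    have hY := FYr r h
    have a1 := h2 r (F1 r h)
    have hr0 : r ≠ 0 := by linarith
    have hr1 : r - 1 ≠ 0 := by linarith
    have hY0 : Y0 B r ≠ 0 := by linarith
    have eq : d' r = -((1 - 1 / r) / Y0 B r ^ 2) * (b2 (Y0 B r) + Y0 B r ^ 2 * (mgr' B (r - 1) * (r / (r - 1)))) := by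
      simp only [hd']
      generalize mgr' B (r - 1) = q
      field_simp
      ring
    have p1 : 0 ≤ 1 - 1 / r := by
      have : 1 / r ≤ 1 := by rw [div_le_one (by linarith)]; linarith
      linarith
    have p2 : 1 - 1 / r ≤ 1 := by
      have : 0 ≤ 1 / r := by positivity
      linarith
    rw [eq, abs_mul, abs_neg, abs_of_nonneg (by positivity)]
    have p3 : (1 - 1 / r) / Y0 B r ^ 2 ≤ 4 / r ^ 2 := by
      rw [div_le_div_iff₀ (by positivity) (by positivity)]
      have : r ^ 2 ≤ 4 * Y0 B r ^ 2 := by nlinarith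
      nlinarith [sq_nonneg r]
    calc _ ≤ 4 / r ^ 2 * e r := mul_le_mul p3 a1 (abs_nonneg _) (by positivity)
      _ = _ := by ring
  set D : ℝ → ℝ := fun r => B * ((r - 1) ^ 2 / r) * d r with hD
  set D' : ℝ → ℝ := fun r => B * (1 - 1 / r ^ 2) * d r + B * ((r - 1) ^ 2 / r) * d' r with hD'
  have hDd : ∀ r, r2 ≤ r → HasDerivAt D (D' r) r := by
    intro r h
    have h4 := F4 r h
    have hr0 : r ≠ 0 := by linarith
    have a1 : HasDerivAt (fun r : ℝ => (r - 1) ^ 2) (2 * (r - 1)) r := by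
      have := ((hasDerivAt_id r).sub_const 1).pow 2
      refine this.congr_deriv ?_
      simp
    refine (((a1.fun_div (hasDerivAt_id r) hr0).const_mul B).fun_mul (hdd r h)).congr_deriv ?_
    simp only [hD', id]
    field_simp
    ring
  have hmc : ContinuousOn m (Set.Ioi y0) := fun y hy => (hm y hy).continuousAt.continuousWithinAt
  have hYc : ContinuousOn (Y0 B) (Set.Ici r2) := fun r h =>
    (Y0_hasDerivAt hB (by linarith [F4 r h] : 0 < r)).continuousAt.continuousWithinAt
  have hYm : Set.MapsTo (Y0 B) (Set.Ici r2) (Set.Ioi y0) := fun r h => by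
    have := FY r h
    simp only [Set.mem_Ioi]; linarith
  have hdc : ContinuousOn d (Set.Ici r2) := fun r h => (hdd r h).continuousAt.continuousWithinAt
  have hdc' : ContinuousOn d' (Set.Ici r2) := by
    have c1 : ContinuousOn (fun r => b2 (Y0 B r)) (Set.Ici r2) := hb2c.comp hYc hYm
    have z1 : ∀ r ∈ Set.Ici r2, Y0 B r ^ 2 ≠ 0 := fun r h => by
      have := FY r h
      have : 0 < Y0 B r := by linarith
      positivity
    have z2 : ∀ r ∈ Set.Ici r2, r ≠ 0 := fun r h => by linarith [F4 r h]
    have z3 : ∀ r ∈ Set.Ici r2, B * (r - 1) ^ 2 ≠ 0 := fun r h => by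
      have : 0 < r - 1 := by linarith [F4 r h]
      positivity
    have z4 : ∀ r ∈ Set.Ici r2, (r - 1) ^ 3 ≠ 0 := fun r h => by
      have : 0 < r - 1 := by linarith [F4 r h]
      positivity
    simp only [hd', mgr']
    have z5 : B ≠ 0 := hB0.ne'
    fun_prop (disch := assumption)
  have hDc' : ContinuousOn D' (Set.Ici r2) := by
    simp only [hD']
    have z2 : ∀ r ∈ Set.Ici r2, r ≠ 0 := fun r h => by linarith [F4 r h]
    have z3 : ∀ r ∈ Set.Ici r2, r ^ 2 ≠ 0 := fun r h => pow_ne_zero _ (z2 r h)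
    fun_prop (disch := assumption)
  obtain ⟨φ, ψ, hφψ⟩ := P5core B r2 hB (by linarith [F4 r2 le_rfl]) (fun r φ => m (Y0 B r + φ)) D D' e
    (by
      apply hmc.comp
      · exact (hYc.comp continuousOn_fst (fun p hp => hp.1)).add continuousOn_snd
      · intro p hp
        have a1 := FY p.1 hp.1
        have a2 := hp.2.1
        simp only [Set.mem_Ioi]; linarith)
    (fun r h => (hDd r h).continuousAt.continuousWithinAt) hDc' (fun r h => hDd r h.le)
    (by
      intro r h
      have a1 := (hr2 r h).1.le
      have h4 := F4 r h
      rw [abs_mul, abs_of_pos (by linarith)] at a1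
      simp only [add_zero]
      rw [le_div_iff₀ (by linarith)]; linarith)
    (by
      intro r h
      simp only [add_zero]
      exact (hr2 r h).2.1.le)
    (by
      intro r h φ φ' hφ hφ'
      have h4 := F4 r h
      have hY := FYr r h
      have hy0 := Fy0 r h
      have hyb' := Fyb r h
      have key := Convex.norm_image_sub_le_of_norm_hasDerivWithin_le (C := 8 / r ^ 2)
        (f := m) (f' := fun y => -(b2 y) / y ^ 2) (s := Set.Ici (r / 2))
        (x := Y0 B r + φ') (y := Y0 B r + φ)
        (fun s hs => (hm s (by have : r / 2 ≤ s := hs; linarith)).hasDerivWithinAt) (by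
          intro s hs
          have hs' : r / 2 ≤ s := hs
          have b := hyb s (by linarith)
          have hs0 : 0 < s := by linarith
          rw [Real.norm_eq_abs, abs_div, abs_neg, abs_of_pos (by positivity : 0 < s ^ 2)]
          rw [div_le_div_iff₀ (by positivity) (by positivity)]
          have : r ^ 2 ≤ 4 * s ^ 2 := by nlinarith
          nlinarith [sq_nonneg r]) (convex_Ici _)
          (by have := (abs_le.1 hφ').1; simp only [Set.mem_Ici]; linarith)
          (by have := (abs_le.1 hφ).1; simp only [Set.mem_Ici]; linarith)
      simpa [Real.norm_eq_abs] using key)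
    (by
      intro r h
      have h4 := F4 r h
      have hr0 : r ≠ 0 := by linarith
      have hr1 : r - 1 ≠ 0 := by linarith
      simp only [add_zero]
      have : m (Y0 B r) = d r + mgr B (r - 1) := by simp only [hd]; ring
      rw [this]
      simp only [hD, mgr]
      field_simp
      ring)
    (fun r h => he0 r (F1 r h))
    (he.mono (fun r h => F1 r h))
    (by
      intro r h
      have h4 := F4 r h
      have a1 := hdb r h
      simp only [hD]
      rw [abs_mul, abs_of_nonneg (by positivity)]
      have : (r - 1) ^ 2 / r ≤ r := by
        rw [div_le_iff₀ (by linarith)]; nlinarith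
      have a0 : 0 ≤ e r := he0 r (F1 r h)
      calc _ ≤ B * r * (2 * e r / r) := by
            apply mul_le_mul _ a1 (abs_nonneg _) (by positivity)
            exact mul_le_mul_of_nonneg_left this hB0.le
        _ = _ := by field_simp)
    (by
      intro r h
      have h4 := F4 r h
      have a1 := hdb r h
      have a2 := hdb' r h
      have a0 : 0 ≤ e r := he0 r (F1 r h)
      simp only [hD']
      have p1 : 0 ≤ 1 - 1 / r ^ 2 := by
        have : 1 / r ^ 2 ≤ 1 := by rw [div_le_one (by positivity)]; nlinarith
        linarith
      have p2 : 1 - 1 / r ^ 2 ≤ 1 := by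
        have : 0 ≤ 1 / r ^ 2 := by positivity
        linarith
      have : (r - 1) ^ 2 / r ≤ r := by
        rw [div_le_iff₀ (by linarith)]; nlinarith
      refine (abs_add_le _ _).trans ?_
      rw [abs_mul, abs_of_nonneg (by positivity), abs_mul, abs_of_nonneg (by positivity : 0 ≤ B * ((r - 1) ^ 2 / r))]
      calc _ ≤ B * 1 * (2 * e r / r) + B * r * (4 * e r / r ^ 2) := by
            apply add_le_add
            · apply mul_le_mul _ a1 (abs_nonneg _) (by positivity)
              exact mul_le_mul_of_nonneg_left p2 hB0.le
            · apply mul_le_mul _ a2 (abs_nonneg _) (by positivity)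
              exact mul_le_mul_of_nonneg_left this hB0.le
        _ = _ := by field_simp; ring)
    (fun r h => (hr2 r h).2.2.2.1) (fun r h => (hr2 r h).2.2.2.2.1)
  refine ⟨r2, 258 * B ^ 2, φ, ψ, F1 r2 le_rfl, by linarith [F4 r2 le_rfl], by positivity, ?_⟩
  intro r h
  exact ⟨FY r h.le, hφψ r h⟩


noncomputable def tt (r : ℝ) : ℝ := Real.exp (-(r - 1) / 2)

lemma tt_pos (r : ℝ) : 0 < tt r := Real.exp_pos _

lemma tt_log (r : ℝ) : -2 * Real.log (tt r) = r - 1 := by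
  unfold tt; rw [Real.log_exp]; ring

lemma tt_anti {a b : ℝ} (h : a ≤ b) : tt b ≤ tt a := by
  unfold tt; apply Real.exp_le_exp.2; linarith

lemma tt_tendsto : Tendsto tt atTop (nhdsWithin 0 (Set.Ioi 0)) := by
  apply tendsto_nhdsWithin_of_tendsto_nhds_of_eventually_within
  · apply Real.tendsto_exp_atBot.comp
    have : Tendsto (fun r : ℝ => (1 / 2) * (1 - r)) atTop atBot := by
      apply Tendsto.const_mul_atBot (by norm_num)
      exact tendsto_atBot_add_const_left _ _ tendsto_neg_atTop_atBot
    refine this.congr (fun r => by ring)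
  · exact Eventually.of_forall tt_pos

lemma sup_facts {R : ℝ → ℝ} (hR0 : ∀ t, 0 ≤ R t)
    (h : Tendsto (fun t => (-Real.log t) ^ ((1 : ℝ) / 2) * R t)
      (nhdsWithin 0 (Set.Ioi 0)) (nhds 0)) :
    ∃ r1 : ℝ, 2 ≤ r1 ∧ (∀ r, r1 ≤ r → R (tt r) ≤ sSup (R '' Set.Ioc 0 (tt r))) ∧
      (∀ r, r1 ≤ r → 0 ≤ sSup (R '' Set.Ioc 0 (tt r))) ∧
      AntitoneOn (fun r => sSup (R '' Set.Ioc 0 (tt r))) (Set.Ici r1) ∧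
      Tendsto (fun r => √r * sSup (R '' Set.Ioc 0 (tt r))) atTop (nhds 0) := by
  have key : ∀ ε : ℝ, 0 < ε → ∃ r1 : ℝ, 2 ≤ r1 ∧ ∀ r, r1 ≤ r → ∀ s ∈ Set.Ioc 0 (tt r),
      √r * R s ≤ ε := by
    intro ε hε
    have h1 := (h.eventually_lt_const (show (0 : ℝ) < ε / 2 by linarith))
    rw [eventually_nhdsWithin_iff, Metric.eventually_nhds_iff] at h1
    obtain ⟨δ, hδ, h1⟩ := h1
    have h2 : ∀ᶠ r in atTop, tt r < δ := (tendsto_nhdsWithin_iff.1 tt_tendsto).1.eventually_lt_const hδ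
    obtain ⟨r1, hr1⟩ := eventually_atTop.1 (h2.and (eventually_ge_atTop 2))
    refine ⟨r1, (hr1 r1 le_rfl).2, ?_⟩
    intro r hr s hs
    obtain ⟨a1, a2⟩ := hr1 r hr
    have a3 := h1 (y := s) (by rw [dist_zero_right, Real.norm_eq_abs, abs_of_pos hs.1]; linarith [hs.2]) hs.1
    rw [← Real.sqrt_eq_rpow] at a3
    have a4 : (r - 1) / 2 ≤ -Real.log s := by
      have := Real.log_le_log hs.1 hs.2
      have := tt_log r
      linarith
    have a5 : √r ≤ 2 * √(-Real.log s) := by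
      rw [Real.sqrt_le_left (by positivity), mul_pow, Real.sq_sqrt (by linarith)]
      linarith
    have := mul_le_mul_of_nonneg_right a5 (hR0 s)
    linarith
  obtain ⟨r1, hr1, k1⟩ := key 1 one_pos
  have bdd : ∀ r, r1 ≤ r → BddAbove (R '' Set.Ioc 0 (tt r)) := by
    intro r hr
    refine ⟨1, ?_⟩
    rintro _ ⟨s, hs, rfl⟩
    have := k1 r hr s hs
    have h1 : 1 ≤ √r := Real.one_le_sqrt.2 (by linarith)
    nlinarith [hR0 s]
  have mem : ∀ r, R (tt r) ∈ R '' Set.Ioc 0 (tt r) := fun r =>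
    ⟨tt r, ⟨tt_pos r, le_rfl⟩, rfl⟩
  have nn : ∀ r, 0 ≤ sSup (R '' Set.Ioc 0 (tt r)) := by
    intro r
    apply Real.sSup_nonneg
    rintro _ ⟨s, hs, rfl⟩
    exact hR0 s
  refine ⟨r1, hr1, fun r hr => le_csSup (bdd r hr) (mem r), fun r _ => nn r, ?_, ?_⟩
  · intro a ha b hb hab
    apply csSup_le_csSup (bdd a ha) ⟨_, mem b⟩
    apply Set.image_mono
    exact Set.Ioc_subset_Ioc_right (tt_anti hab)
  · rw [Metric.tendsto_atTop]
    intro ε hε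
    obtain ⟨r3, hr3, k3⟩ := key (ε / 2) (by linarith)
    refine ⟨r3, fun r hr => ?_⟩
    rw [dist_zero_right, Real.norm_eq_abs, abs_of_nonneg (mul_nonneg (Real.sqrt_nonneg _) (nn r))]
    have hs : 0 < √r := Real.sqrt_pos.2 (by linarith)
    have : sSup (R '' Set.Ioc 0 (tt r)) ≤ ε / 2 / √r := by
      apply csSup_le ⟨_, mem r⟩
      rintro _ ⟨s, hs', rfl⟩
      rw [le_div_iff₀ hs]
      have := k3 r hr s hs'
      linarith
    rw [le_div_iff₀ hs] at this
    linarith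


lemma exp_negY0 {B r : ℝ} (hB : 1 ≤ B) (hr : 0 < r) :
    Real.exp (-Y0 B r) = B / 4 * r * Real.exp (-(r - 1)) := by
  have : 0 < B := by linarith
  unfold Y0
  rw [show -(r - 1 - Real.log (B * r / 4)) = Real.log (B * r / 4) + -(r - 1) by ring, Real.exp_add,
    Real.exp_log (by positivity)]
  ring

theorem P6 (f ut : ℝ → ℝ) (s₀ B t₁ : ℝ)
    (hf : ContDiffOn ℝ 2 f (Set.Ioi s₀))
    (hfpos : ∀ s, s₀ < s → 0 < f s)
    (hf' : ∀ s, s₀ < s → 0 < deriv f s)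
    (hfint : ∀ s, s₀ < s → IntegrableOn (fun τ => 1 / f τ) (Set.Ioi s))
    (hB : 1 ≤ B)
    (hf2a : Tendsto (fun s => deriv f s * Fint f s) atTop (nhds 1))
    (hf2b : Tendsto (fun s => invB2 f (Fint f) s) atTop (nhds (1 / B)))
    (ht₁ : t₁ ∈ Set.Ioo (0 : ℝ) 1)
    (hut : ∀ t ∈ Set.Ioo (0 : ℝ) t₁, s₀ < ut t ∧ Fint f (ut t) = modelG B (modelv B t))
    (h11a : Tendsto (fun t => (-Real.log t) ^ ((1 : ℝ) / 2) * (R1 f ut B t + R2 f ut B t))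
      (nhdsWithin 0 (Set.Ioi 0)) (nhds 0)) :
    ∃ r2 C : ℝ, ∃ U P : ℝ → ℝ, 2 ≤ r2 ∧ 0 < C ∧ Tendsto U atTop atTop ∧ ∀ r, r2 < r →
      s₀ < U r ∧ HasDerivAt U (P r) r ∧ HasDerivAt P (-(f (U r) * Real.exp (-(r - 1)) / 4)) r ∧
      |U r - ut (tt r)| ≤ C * f (ut (tt r)) * Fint f (ut (tt r)) *
            sSup ((fun s => R1 f ut B s + R2 f ut B s) '' Set.Ioc 0 (tt r)) := by
  have hB0 : 0 < B := by linarith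
  obtain ⟨S, y0, hy0, hS, hSt, hSu⟩ := exists_S hf.continuousOn hfpos hfint
  obtain ⟨m1, m2, m3, m4, m5⟩ := m_facts hf hf' hy0 hS hSt hf2a hf2b
  set m : ℝ → ℝ := fun y => 1 - deriv f (S y) * Real.exp (-y) with hm
  set b2 : ℝ → ℝ := fun y => invB2 f (Fint f) (S y) with hb2
  set R : ℝ → ℝ := fun s => R1 f ut B s + R2 f ut B s with hR
  have hR1 : ∀ t, 0 ≤ R1 f ut B t := fun t => abs_nonneg _
  have hR2 : ∀ t, 0 ≤ R2 f ut B t := fun t => abs_nonneg _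
  obtain ⟨r1, hr1, s1, s2, s3, s4⟩ := sup_facts (R := R)
    (fun t => add_nonneg (hR1 t) (hR2 t)) h11a
  set e : ℝ → ℝ := fun r => sSup (R '' Set.Ioc 0 (tt r)) with he
  have hYt := Y0_tendsto hB
  have hmpos : ∀ᶠ y in atTop, 0 < m y := by
    filter_upwards [m4.eventually_const_lt (show 0 < 1 / B by positivity), eventually_gt_atTop 0]
      with y h1 h2
    exact (mul_pos_iff_of_pos_left h2).1 h1
  obtain ⟨ya, hya⟩ := eventually_atTop.1 (hmpos.and (eventually_gt_atTop y0))
  obtain ⟨r1', hr1'⟩ := eventually_atTop.1 ((((tendsto_nhdsWithin_iff.1 tt_tendsto).1).eventually_lt_const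
    ht₁.1).and ((hYt.eventually_gt_atTop (max (y0 + 1) (ya + 1))).and ((eventually_ge_atTop r1).and (eventually_ge_atTop 4))))
  have G1 : ∀ r, r1' ≤ r → tt r < t₁ := fun r h => (hr1' r h).1
  have G2 : ∀ r, r1' ≤ r → y0 + 1 < Y0 B r := fun r h => (le_max_left _ _).trans_lt (hr1' r h).2.1
  have G2' : ∀ r, r1' ≤ r → ya + 1 < Y0 B r := fun r h => (le_max_right _ _).trans_lt (hr1' r h).2.1
  have G3 : ∀ r, r1' ≤ r → r1 ≤ r := fun r h => (hr1' r h).2.2.1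
  have G4 : ∀ r, r1' ≤ r → 4 ≤ r := fun r h => (hr1' r h).2.2.2
  have hv : ∀ r, modelv B (tt r) = vvr B (r - 1) := by
    intro r; unfold modelv vvr; rw [tt_log]
  have hG : ∀ r, r1' ≤ r → modelG B (vvr B (r - 1)) = Real.exp (-Y0 B r) := by
    intro r h
    have h4 := G4 r h
    rw [(model_facts hB (by linarith : 2 < r - 1)).1, exp_negY0 hB (by linarith)]
    ring
  have hutS : ∀ r, r1' ≤ r → ut (tt r) = S (Y0 B r) := by
    intro r h
    obtain ⟨a1, a2⟩ := hut (tt r) ⟨tt_pos r, G1 r h⟩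
    apply hSu _ _ (by linarith [G2 r h]) a1
    rw [a2, hv, hG r h]
  have H1 : ∀ r, r1' ≤ r → |Y0 B r * (m (Y0 B r) - mgr B (r - 1))| ≤ e r := by
    intro r h
    have h4 := G4 r h
    refine le_trans (le_of_eq ?_) ((le_add_of_nonneg_right (hR2 (tt r))).trans (s1 r (G3 r h)))
    unfold R1
    rw [hutS r h, ← m3 _ (by linarith [G2 r h]), hv]
    unfold invB1
    rw [(model_facts hB (by linarith : 2 < r - 1)).2.1, hG r h, Real.log_exp]
    congr 1
    simp only [hm]
    ring
  have H2 : ∀ r, r1' ≤ r → |b2 (Y0 B r) + Y0 B r ^ 2 * (mgr' B (r - 1) * (r / (r - 1)))| ≤ e r := by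
    intro r h
    have h4 := G4 r h
    refine le_trans (le_of_eq ?_) ((le_add_of_nonneg_left (hR1 (tt r))).trans (s1 r (G3 r h)))
    unfold R2
    rw [hutS r h, hv, (model_facts hB (by linarith : 2 < r - 1)).2.2, hG r h, Real.log_exp]
    congr 1
    simp only [hb2]
    rw [show r - 1 + 1 = r by ring]
    ring
  obtain ⟨r2, C, φ, ψ, hr2, hr2', hC, hφψ⟩ := P5ev B y0 r1' hB hy0 m b2 e m1 m2 m5 m4
    (fun r h => s2 r (G3 r h)) (s3.mono fun r h => G3 r h) s4 H1 H2
  set A : ℝ → ℝ := fun y => f (S y) * Real.exp (-y) with hA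
  have hdf : ∀ s, s₀ < s → HasDerivAt f (deriv f s) s := fun s hs =>
    ((hf.contDiffAt (Ioi_mem_nhds hs)).differentiableAt (by norm_num)).hasDerivAt
  have hAd : ∀ y, y0 < y → HasDerivAt A (-(m y * A y)) y := by
    intro y hy
    obtain ⟨a1, a2, a3⟩ := hS y hy
    have b1 := (hdf (S y) a1).comp y a3
    have b2 : HasDerivAt (fun y : ℝ => Real.exp (-y)) (Real.exp (-y) * (-1)) y :=
      (hasDerivAt_neg y).exp
    refine (b1.fun_mul b2).congr_deriv ?_
    simp only [hm, hA, Function.comp]; ring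
  have hApos : ∀ y, y0 < y → 0 < A y := fun y hy => mul_pos (hfpos _ (hS y hy).1) (Real.exp_pos _)
  have hSmono : MonotoneOn S (Set.Ioi y0) := by
    apply monotoneOn_of_deriv_nonneg (convex_Ioi _)
    · exact fun y hy => (hS y hy).2.2.continuousAt.continuousWithinAt
    · intro y hy; rw [interior_Ioi] at hy
      exact (hS y hy).2.2.differentiableAt.differentiableWithinAt
    · intro y hy; rw [interior_Ioi] at hy
      rw [(hS y hy).2.2.deriv]; exact (hApos y hy).le
  have hfmono : MonotoneOn f (Set.Ioi s₀) := by
    apply monotoneOn_of_deriv_nonneg (convex_Ioi _) hf.continuousOn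
    · rw [interior_Ioi]; exact hf.differentiableOn (by norm_num)
    · intro y hy; rw [interior_Ioi] at hy; exact (hf' y hy).le
  have hAanti : AntitoneOn A (Set.Ici ya) := by
    apply antitoneOn_of_deriv_nonpos (convex_Ici _)
    · exact fun y hy => (hAd y (hya y hy).2).continuousAt.continuousWithinAt
    · intro y hy; rw [interior_Ici] at hy
      exact (hAd y (hya y (le_of_lt hy)).2).differentiableAt.differentiableWithinAt
    · intro y hy; rw [interior_Ici] at hy
      obtain ⟨c1, c2⟩ := hya y (le_of_lt hy)
      rw [(hAd y c2).deriv]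
      have := mul_pos c1 (hApos y c2)
      linarith
  have hyd : ∀ r, r2 < r → HasDerivAt (fun r => Y0 B r + φ r) (1 - 1 / r + ψ r) r := fun r h =>
    (Y0_hasDerivAt hB (by linarith)).fun_add (hφψ r h).2.1
  have hyy : ∀ r, r2 < r → y0 < Y0 B r + φ r := fun r h => by
    obtain ⟨a1, a2, a3, a4, a5⟩ := hφψ r h
    have := (abs_le.1 a5).1
    linarith
  refine ⟨r2, Real.exp 1 * C, fun r => S (Y0 B r + φ r),
    fun r => A (Y0 B r + φ r) * (1 - 1 / r + ψ r), hr2', by positivity, ?_, ?_⟩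
  · apply hSt.comp
    apply tendsto_atTop_mono' atTop _ (tendsto_atTop_add_const_right atTop (-1 : ℝ) hYt)
    filter_upwards [eventually_gt_atTop r2] with r h
    have := (abs_le.1 (hφψ r h).2.2.2.2).1
    linarith
  intro r h
  obtain ⟨a1, a2, a3, a4, a5⟩ := hφψ r h
  have hr0 : 0 < r := by linarith
  have y1 := hyy r h
  refine ⟨(hS _ y1).1, ?_, ?_, ?_⟩
  · exact (hS _ y1).2.2.comp r (hyd r h)
  · have d1 := (hAd _ y1).comp r (hyd r h)
    have d0 : HasDerivAt (fun r : ℝ => 1 - 1 / r) (1 / r ^ 2) r := by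
      have := (hasDerivAt_inv hr0.ne').const_sub 1
      simp only [one_div]
      refine this.congr_deriv ?_
      ring
    have d2 := d0.fun_add a3
    refine (d1.fun_mul d2).congr_deriv ?_
    have e1 : A (Y0 B r + φ r) * Real.exp (φ r) =
      f (S (Y0 B r + φ r)) * (B / 4 * r * Real.exp (-(r - 1))) := by
      rw [← exp_negY0 hB hr0]
      simp only [hA]
      rw [mul_assoc, ← Real.exp_add]
      congr 2; ring
    have e2 : f (S (Y0 B r + φ r)) * Real.exp (-(r - 1)) / 4 =
       A (Y0 B r + φ r) * Real.exp (φ r) / (B * r) := by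
      rw [e1]; field_simp
    simp only [Function.comp] at e2 ⊢
    rw [e2]
    ring
  · have hr' : r1' ≤ r := hr2.trans h.le
    rw [hutS r hr', (hS _ (by linarith : y0 < Y0 B r)).2.1]
    have g2 := G2' r hr'
    have bound : ∀ y ∈ Set.Icc (Y0 B r - 1) (Y0 B r + 1), ‖f (S y) * Real.exp (-y)‖ ≤
        Real.exp 1 * A (Y0 B r) := by
      intro y hy
      have hy0' : y0 < y := by linarith [hy.1]
      rw [Real.norm_eq_abs, abs_of_pos (hApos y hy0')]
      rcases le_total y (Y0 B r) with hle | hle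
      · have q1 : f (S y) ≤ f (S (Y0 B r)) := hfmono (hS y hy0').1 (hS (Y0 B r) (by linarith)).1
          (hSmono hy0' (by simp only [Set.mem_Ioi]; linarith) hle)
        have q2 : Real.exp (-y) ≤ Real.exp 1 * Real.exp (-Y0 B r) := by
          rw [← Real.exp_add]; apply Real.exp_le_exp.2; linarith [hy.1]
        calc f (S y) * Real.exp (-y) ≤ f (S (Y0 B r)) * (Real.exp 1 * Real.exp (-Y0 B r)) :=
              mul_le_mul q1 q2 (Real.exp_pos _).le (hfpos _ (hS (Y0 B r) (by linarith)).1).le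
          _ = _ := by simp only [hA]; ring
      · have q1 : A y ≤ A (Y0 B r) := hAanti (by simp only [Set.mem_Ici]; linarith)
          (by simp only [Set.mem_Ici]; linarith) hle
        have q2 := hApos (Y0 B r) (by linarith)
        have q3 : (1 : ℝ) ≤ Real.exp 1 := Real.one_le_exp (by norm_num)
        calc _ ≤ A (Y0 B r) := q1
          _ ≤ _ := le_mul_of_one_le_left q2.le q3
    have key := Convex.norm_image_sub_le_of_norm_hasDerivWithin_le
        (f := S) (f' := fun y => f (S y) * Real.exp (-y))
        (x := Y0 B r) (y := Y0 B r + φ r)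
        (fun s hs => (hS s (by linarith [hs.1])).2.2.hasDerivWithinAt) bound (convex_Icc _ _)
        ⟨by linarith, by linarith⟩
        ⟨by linarith [(abs_le.1 a5).1], by linarith [(abs_le.1 a5).2]⟩
    rw [Real.norm_eq_abs, Real.norm_eq_abs, add_sub_cancel_left] at key
    refine key.trans ?_
    calc Real.exp 1 * A (Y0 B r) * |φ r| ≤ Real.exp 1 * A (Y0 B r) * (C * e r) :=
          mul_le_mul_of_nonneg_left a4 (mul_nonneg (Real.exp_pos _).le (hApos _ (by linarith)).le)
      _ = _ := by simp only [hA]; ring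


theorem P7 (f : ℝ → ℝ) (K c r3 : ℝ) (hK : 0 < K) (hc : 0 < c)
    (hfC1 : ContDiffOn ℝ 1 f (Set.Ici 0)) (hfpos0 : ∀ s > (0 : ℝ), 0 < f s) :
    ∃ (W Q : ℝ → ℝ) (L rR : ℝ), L < rR ∧ rR < r3 ∧ W r3 = K ∧ Q r3 = c ∧ W rR = 0 ∧
      (∀ r ∈ Set.Ioc rR r3, 0 < W r) ∧
      ∀ r ∈ Set.Ioc L r3, HasDerivWithinAt W (Q r) (Set.Iic r3) r ∧
        HasDerivWithinAt Q (-(f (max 0 (W r)) * Real.exp (-(r - 1)) / 4)) (Set.Iic r3) r := by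
  have hsub : Set.Icc 0 K ⊆ Set.Ici (0 : ℝ) := Set.Icc_subset_Ici_self
  obtain ⟨Kf, hKf⟩ := (hfC1.mono hsub).exists_lipschitzOnWith one_ne_zero (convex_Icc 0 K) isCompact_Icc
  obtain ⟨H, hH⟩ := isCompact_Icc.exists_bound_of_continuousOn (hfC1.continuousOn.mono hsub)
  have hf0 : ∀ s ∈ Set.Ici (0 : ℝ), 0 ≤ f s := by
    have hc0 : ContinuousOn f (closure (Set.Ioi (0 : ℝ))) := by
      rw [closure_Ioi]; exact hfC1.continuousOn
    intro s hs
    rw [← closure_Ioi (0 : ℝ)] at hs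
    have := hc0.image_closure
    have h2 : f s ∈ closure (f '' Set.Ioi 0) := this ⟨s, hs, rfl⟩
    have h3 : closure (f '' Set.Ioi 0) ⊆ Set.Ici 0 := by
      apply closure_minimal _ isClosed_Ici
      rintro _ ⟨x, hx, rfl⟩
      exact (hfpos0 x hx).le
    exact h3 h2
  set p : ℝ → ℝ := fun s => max 0 (min K s) with hp
  have hpm : ∀ s, p s ∈ Set.Icc 0 K := fun s =>
    ⟨le_max_left _ _, max_le hK.le (min_le_left _ _)⟩
  have hpl : ∀ s s', |p s - p s'| ≤ |s - s'| := by
    intro s s'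
    refine (abs_max_sub_max_le_max _ _ _ _).trans (max_le (by simp) ?_)
    exact (abs_min_sub_min_le_max _ _ _ _).trans (max_le (by simp) le_rfl)
  have hF0 : ∀ s, 0 ≤ f (p s) := fun s => hf0 _ (hpm s).1
  have hFH : ∀ s, f (p s) ≤ H := fun s => (le_abs_self _).trans (hH _ (hpm s))
  have hH0 : 0 ≤ H := (hF0 0).trans (hFH 0)
  have hFl : ∀ s s', |f (p s) - f (p s')| ≤ Kf * |s - s'| := by
    intro s s'
    have := hKf.dist_le_mul _ (hpm s) _ (hpm s')
    rw [Real.dist_eq, Real.dist_eq] at this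
    exact this.trans (mul_le_mul_of_nonneg_left (hpl s s') Kf.2)
  set L : ℝ := r3 - K / c - 1 with hL
  have hKc : 0 < K / c := by positivity
  have hLr : L < r3 := by rw [hL]; linarith
  set h : ℝ → ℝ := fun r => Real.exp (-(r - 1)) / 4 with hh
  have hh0 : ∀ r, 0 < h r := fun r => by simp only [hh]; positivity
  have hhL : ∀ r, L ≤ r → h r ≤ h L := fun r hr => by
    simp only [hh]
    have : Real.exp (-(r - 1)) ≤ Real.exp (-(L - 1)) := Real.exp_le_exp.2 (by linarith)
    linarith
  have hhc : Continuous h := by simp only [hh]; fun_prop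
  set N : ℝ := c + H * h L * (r3 - L) with hN
  have hHL : 0 ≤ H * h L := mul_nonneg hH0 (hh0 L).le
  have hN0 : 0 ≤ N := by
    have : 0 ≤ H * h L * (r3 - L) := mul_nonneg hHL (by linarith)
    linarith
  set v : ℝ → ℝ × ℝ → ℝ × ℝ := fun r x => (clp N x.2, -(f (p x.1) * h r)) with hv
  have hPL : IsPicardLindelof v (tmin := L) (tmax := r3) ⟨r3, hLr.le, le_rfl⟩ ((K, c) : ℝ × ℝ)
      (Real.toNNReal ((N + H * h L) * (r3 - L))) 0 (Real.toNNReal (N + H * h L))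
      (1 + Kf * Real.toNNReal (h L)) := by
    constructor
    · intro t ht
      apply LipschitzWith.lipschitzOnWith
      apply LipschitzWith.of_dist_le_mul
      intro x y
      rw [Prod.dist_eq, Prod.dist_eq]
      simp only [hv, Real.dist_eq]
      push_cast
      rw [Real.coe_toNNReal _ (hh0 L).le]
      have m1 : |x.1 - y.1| ≤ max |x.1 - y.1| |x.2 - y.2| := le_max_left _ _
      have m2 : |x.2 - y.2| ≤ max |x.1 - y.1| |x.2 - y.2| := le_max_right _ _
      set Δ := max |x.1 - y.1| |x.2 - y.2|
      have hΔ : 0 ≤ Δ := (abs_nonneg _).trans m1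
      have kh : 0 ≤ (Kf : ℝ) * h L := mul_nonneg Kf.2 (hh0 L).le
      apply max_le
      · refine (clp_lip _ _ _).trans (m2.trans ?_)
        nlinarith
      · have e1 : -(f (p x.1) * h t) - -(f (p y.1) * h t) = (f (p y.1) - f (p x.1)) * h t := by ring
        rw [e1, abs_mul, abs_of_pos (hh0 t)]
        have e2 := hFl y.1 x.1
        rw [abs_sub_comm y.1] at e2
        have e3 : (Kf : ℝ) * |x.1 - y.1| ≤ Kf * Δ := mul_le_mul_of_nonneg_left m1 Kf.2
        calc _ ≤ (Kf * Δ) * h L := mul_le_mul (e2.trans e3) (hhL t ht.1) (hh0 t).le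
              (mul_nonneg Kf.2 hΔ)
          _ ≤ _ := by nlinarith
    · intro x _
      simp only [hv]
      fun_prop
    · intro t ht x _
      rw [Real.coe_toNNReal _ (by linarith), Prod.norm_def]
      simp only [hv, Real.norm_eq_abs]
      apply max_le
      · exact (clp_abs hN0 _).trans (by linarith)
      · rw [abs_neg, abs_mul, abs_of_pos (hh0 t), abs_of_nonneg (hF0 _)]
        have := mul_le_mul (hFH x.1) (hhL t ht.1) (hh0 t).le hH0
        linarith
    · rw [Real.coe_toNNReal _ (by linarith), Real.coe_toNNReal _ (mul_nonneg (by linarith) (by linarith))]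
      simp only [sub_self, NNReal.coe_zero, sub_zero]
      rw [max_eq_right (by linarith)]
  obtain ⟨α, hα0, hα⟩ := hPL.exists_eq_forall_mem_Icc_hasDerivWithinAt₀
  simp only at hα0
  set W : ℝ → ℝ := fun r => (α r).1 with hW
  set Q : ℝ → ℝ := fun r => (α r).2 with hQ
  have hW3 : W r3 = K := by simp only [hW]; rw [hα0]
  have hQ3 : Q r3 = c := by simp only [hQ]; rw [hα0]
  have hWd : ∀ r ∈ Set.Icc L r3, HasDerivWithinAt W (clp N (Q r)) (Set.Icc L r3) r := fun r hr => by
    have := (ContinuousLinearMap.fst ℝ ℝ ℝ).hasFDerivAt.comp_hasDerivWithinAt r (hα r hr)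
    exact this
  have hQd : ∀ r ∈ Set.Icc L r3, HasDerivWithinAt Q (-(f (p (W r)) * h r)) (Set.Icc L r3) r := fun r hr => by
    have := (ContinuousLinearMap.snd ℝ ℝ ℝ).hasFDerivAt.comp_hasDerivWithinAt r (hα r hr)
    exact this
  have hWc : ContinuousOn W (Set.Icc L r3) := fun r hr => (hWd r hr).continuousWithinAt
  have hQc : ContinuousOn Q (Set.Icc L r3) := fun r hr => (hQd r hr).continuousWithinAt
  have hQa : AntitoneOn Q (Set.Icc L r3) := by
    apply antitoneOn_of_deriv_nonpos (convex_Icc _ _) hQc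
    · intro r hr
      exact ((hQd r (interior_subset hr)).differentiableWithinAt).mono interior_subset
    · intro r hr
      rw [interior_Icc] at hr
      rw [((hQd r (Set.Ioo_subset_Icc_self hr)).hasDerivAt (Icc_mem_nhds hr.1 hr.2)).deriv]
      have := mul_nonneg (hF0 (W r)) (hh0 r).le
      linarith
  have hQge : ∀ r ∈ Set.Icc L r3, c ≤ Q r := fun r hr => by
    rw [← hQ3]; exact hQa hr ⟨hLr.le, le_rfl⟩ hr.2
  have hQle : ∀ r ∈ Set.Icc L r3, Q r ≤ N := fun r hr => by
    have key := Convex.norm_image_sub_le_of_norm_hasDerivWithin_le (C := H * h L) hQd (by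
      intro s hs
      rw [Real.norm_eq_abs, abs_neg, abs_mul, abs_of_pos (hh0 s), abs_of_nonneg (hF0 _)]
      exact mul_le_mul (hFH _) (hhL s hs.1) (hh0 s).le hH0) (convex_Icc _ _)
      (⟨hLr.le, le_rfl⟩ : r3 ∈ Set.Icc L r3) hr
    rw [Real.norm_eq_abs, Real.norm_eq_abs, hQ3] at key
    have k1 := (le_abs_self _).trans key
    have k2 : |r - r3| ≤ r3 - L := by
      rw [abs_sub_comm, abs_of_nonneg (by linarith [hr.2])]; linarith [hr.1]
    have := mul_le_mul_of_nonneg_left k2 hHL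
    linarith
  have hcl : ∀ r ∈ Set.Icc L r3, clp N (Q r) = Q r := fun r hr => by
    apply clp_eq
    have := hQge r hr
    rw [abs_of_pos (by linarith)]
    exact hQle r hr
  have hWd' : ∀ r ∈ Set.Icc L r3, HasDerivWithinAt W (Q r) (Set.Icc L r3) r := fun r hr => by
    have := hWd r hr
    rwa [hcl r hr] at this
  have hWm : MonotoneOn (fun r => W r - c * r) (Set.Icc L r3) := by
    have hd : ∀ r ∈ Set.Icc L r3, HasDerivWithinAt (fun r => W r - c * r) (Q r - c * 1) (Set.Icc L r3) r :=
      fun r hr => (hWd' r hr).fun_sub ((hasDerivWithinAt_id r _).const_mul c)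
    apply monotoneOn_of_deriv_nonneg (convex_Icc _ _) (fun r hr => (hd r hr).continuousWithinAt)
    · intro r hr
      exact ((hd r (interior_subset hr)).differentiableWithinAt).mono interior_subset
    · intro r hr
      rw [interior_Icc] at hr
      rw [((hd r (Set.Ioo_subset_Icc_self hr)).hasDerivAt (Icc_mem_nhds hr.1 hr.2)).deriv]
      have := hQge r (Set.Ioo_subset_Icc_self hr)
      linarith
  have hWs : ∀ a ∈ Set.Icc L r3, ∀ b ∈ Set.Icc L r3, a < b → W a < W b := by
    intro a ha b hb hab
    have := hWm ha hb hab.le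
    simp only at this
    nlinarith
  have hWL : W L < 0 := by
    have := hWm (⟨le_rfl, hLr.le⟩ : L ∈ Set.Icc L r3) (⟨hLr.le, le_rfl⟩ : r3 ∈ Set.Icc L r3) hLr.le
    simp only [hW3] at this
    have e1 : c * (r3 - L) = K + c := by rw [hL]; field_simp; ring
    nlinarith
  obtain ⟨rR, hrR, hrR0⟩ := intermediate_value_Ioo hLr.le hWc (⟨hWL, by rw [hW3]; exact hK⟩ : (0 : ℝ) ∈ Set.Ioo (W L) (W r3))
  refine ⟨W, Q, L, rR, hrR.1, hrR.2, hW3, hQ3, hrR0, ?_, ?_⟩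
  · intro r hr
    rw [← hrR0]
    exact hWs rR (Set.Ioo_subset_Icc_self hrR) r ⟨hrR.1.le.trans hr.1.le, hr.2⟩ hr.1
  · intro r hr
    have hr' : r ∈ Set.Icc L r3 := ⟨hr.1.le, hr.2⟩
    have hnb : Set.Icc L r3 ∈ nhdsWithin r (Set.Iic r3) := by
      rw [← Set.Ici_inter_Iic]
      exact inter_mem (mem_nhdsWithin_of_mem_nhds (Ici_mem_nhds hr.1)) self_mem_nhdsWithin
    refine ⟨(hWd' r hr').mono_of_mem_nhdsWithin hnb, ?_⟩
    have hWK : W r ≤ K := by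
      rcases eq_or_lt_of_le hr.2 with e | e
      · rw [e, hW3]
      · rw [← hW3]; exact (hWs r hr' r3 ⟨hLr.le, le_rfl⟩ e).le
    have e1 : p (W r) = max 0 (W r) := by simp only [hp]; rw [min_eq_right hWK]
    have := (hQd r hr').mono_of_mem_nhdsWithin hnb
    rw [e1] at this
    refine this.congr_deriv ?_
    simp only [hh]; ring


lemma glue_hasDerivAt {W U w p : ℝ → ℝ} {r3 L : ℝ} (hWU : W r3 = U r3) (hwp : w r3 = p r3)
    (hW : ∀ r ∈ Set.Ioc L r3, HasDerivWithinAt W (w r) (Set.Iic r3) r)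
    (hU : ∀ r, r3 ≤ r → HasDerivAt U (p r) r) (r : ℝ) (hr : L < r) :
    HasDerivAt (fun x => if x ≤ r3 then W x else U x) (if r ≤ r3 then w r else p r) r := by
  rcases lt_trichotomy r r3 with h | h | h
  · rw [if_pos h.le]
    have h1 := (hW r ⟨hr, h.le⟩).hasDerivAt (Iic_mem_nhds h)
    refine h1.congr_of_eventuallyEq ?_
    filter_upwards [Iio_mem_nhds h] with x hx
    simp only [if_pos (le_of_lt (Set.mem_Iio.mp hx))]
  · subst h
    rw [if_pos le_rfl]
    rw [← hasDerivWithinAt_univ, ← Set.Iic_union_Ici (a := r)]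
    refine HasDerivWithinAt.union ?_ ?_
    · refine (hW r ⟨hr, le_rfl⟩).congr ?_ ?_
      · intro x hx
        simp only [if_pos (Set.mem_Iic.mp hx)]
      · simp
    · have h2 := (hU r le_rfl).hasDerivWithinAt (s := Set.Ici r)
      rw [← hwp] at h2
      refine h2.congr ?_ ?_
      · intro x hx
        by_cases hx2 : x ≤ r
        · have : x = r := le_antisymm hx2 hx
          subst this
          simp [hWU]
        · simp only [if_neg hx2]
      · simp [hWU]
  · rw [if_neg (not_le.mpr h)]
    refine (hU r h.le).congr_of_eventuallyEq ?_
    filter_upwards [Ioi_mem_nhds h] with x hx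
    simp only [if_neg (not_le.mpr (Set.mem_Ioi.mp hx))]

lemma exists_pos_slope {U P : ℝ → ℝ} {r2 : ℝ} (hU : Tendsto U atTop atTop)
    (h : ∀ r, r2 < r → HasDerivAt U (P r) r) : ∃ r3, r2 < r3 ∧ 0 < P r3 := by
  by_contra hcon
  push Not at hcon
  have hanti : AntitoneOn U (Set.Ici (r2 + 1)) := by
    refine antitoneOn_of_deriv_nonpos (convex_Ici _) ?_ ?_ ?_
    · intro x hx
      have hx' : r2 + 1 ≤ x := hx
      exact (h x (by linarith)).continuousAt.continuousWithinAt
    · intro x hx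
      rw [interior_Ici] at hx
      have hx' : r2 + 1 < x := hx
      exact (h x (by linarith)).differentiableAt.differentiableWithinAt
    · intro x hx
      rw [interior_Ici] at hx
      have hx' : r2 + 1 < x := hx
      rw [(h x (by linarith)).deriv]
      exact hcon x (by linarith)
  obtain ⟨x, hx1, hx2⟩ := ((hU.eventually_gt_atTop (U (r2 + 1))).and
    (eventually_ge_atTop (r2 + 1))).exists
  exact absurd (hanti (Set.mem_Ici.mpr le_rfl) (Set.mem_Ici.mpr hx2) hx2) (not_le.mpr hx1)

lemma lift_deriv {Ut Pt q : ℝ → ℝ} {L : ℝ}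
    (h1 : ∀ r, L < r → HasDerivAt Ut (Pt r) r)
    (h2 : ∀ r, L < r → HasDerivAt Pt (q r) r) (t : ℝ) (ht : 0 < t) (hL : L < 1 - 2 * Real.log t) :
    HasDerivAt (fun t => Ut (1 - 2 * Real.log t)) (-2 / t * Pt (1 - 2 * Real.log t)) t ∧
    HasDerivAt (fun t => -2 / t * Pt (1 - 2 * Real.log t))
      (2 / t ^ 2 * Pt (1 - 2 * Real.log t) + 4 / t ^ 2 * q (1 - 2 * Real.log t)) t := by
  have hl : HasDerivAt (fun t => 1 - 2 * Real.log t) (-2 / t) t := by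
    refine (((Real.hasDerivAt_log ht.ne').const_mul 2).const_sub 1).congr_deriv ?_
    field_simp
  have hi : HasDerivAt (fun t : ℝ => -2 / t) (2 / t ^ 2) t := by
    refine ((hasDerivAt_const t (-2 : ℝ)).fun_div (hasDerivAt_id' t) ht.ne').congr_deriv ?_
    ring
  constructor
  · refine ((h1 _ hL).comp t hl).congr_deriv ?_
    ring
  · refine (hi.fun_mul ((h2 _ hL).comp t hl)).congr_deriv ?_
    simp only [Function.comp]
    field_simp
    ring

lemma log_lt_of_tt {r t : ℝ} (ht : 0 < t) : t < tt r ↔ r < 1 - 2 * Real.log t := by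
  have h := tt_log r
  rw [← Real.log_lt_log_iff ht (tt_pos r)]
  constructor <;> intro h1 <;> linarith

lemma tt_inv {t : ℝ} (ht : 0 < t) : tt (1 - 2 * Real.log t) = t := by
  unfold tt
  rw [show -(1 - 2 * Real.log t - 1) / 2 = Real.log t by ring, Real.exp_log ht]

lemma exp_inv {t : ℝ} (ht : 0 < t) : Real.exp (-(1 - 2 * Real.log t - 1)) = t ^ 2 := by
  rw [show -(1 - 2 * Real.log t - 1) = Real.log t + Real.log t by ring, Real.exp_add,
    Real.exp_log ht]
  ring

lemma contDiffOn_two_of {u u1 u2 : ℝ → ℝ} {s : Set ℝ} (hs : IsOpen s)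
    (h1 : ∀ t ∈ s, HasDerivAt u (u1 t) t) (h2 : ∀ t ∈ s, HasDerivAt u1 (u2 t) t)
    (h3 : ContinuousOn u2 s) : ContDiffOn ℝ 2 u s := by
  have e2 : ContDiffOn ℝ 1 u1 s := by
    have : (1 : WithTop ℕ∞) = 0 + 1 := by norm_num
    rw [this, contDiffOn_succ_iff_deriv_of_isOpen hs]
    refine ⟨fun t ht => (h2 t ht).differentiableAt.differentiableWithinAt, by simp, ?_⟩
    rw [contDiffOn_zero]
    exact h3.congr fun t ht => (h2 t ht).deriv
  have : (2 : WithTop ℕ∞) = 1 + 1 := by norm_num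
  rw [this, contDiffOn_succ_iff_deriv_of_isOpen hs]
  refine ⟨fun t ht => (h1 t ht).differentiableAt.differentiableWithinAt, by simp, ?_⟩
  exact e2.congr fun t ht => (h1 t ht).deriv

/-- Theorem 1.1: under (f1), (f2), assumption (1.1a), and global regularity and
positivity of `f` on `[0,∞)`, the Dirichlet problem in radial form has a positive
singular solution `u` on `(0,R]` with `u(R) = 0`, blowing up at the origin and
approximated by `ũ` near `0`. -/
theorem stmt5 (f ut : ℝ → ℝ) (s₀ B t₁ : ℝ) (hs₀ : 0 < s₀)
    (hf : ContDiffOn ℝ 2 f (Set.Ioi s₀))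
    (hfpos : ∀ s, s₀ < s → 0 < f s)
    (hf' : ∀ s, s₀ < s → 0 < deriv f s)
    (hfint : ∀ s, s₀ < s → IntegrableOn (fun τ => 1 / f τ) (Set.Ioi s))
    (hB : 1 ≤ B)
    (hf2a : Tendsto (fun s => deriv f s * Fint f s) atTop (nhds 1))
    (hf2b : Tendsto (fun s => invB2 f (Fint f) s) atTop (nhds (1 / B)))
    (ht₁ : t₁ ∈ Set.Ioo (0 : ℝ) 1)
    (hut : ∀ t ∈ Set.Ioo (0 : ℝ) t₁, s₀ < ut t ∧ Fint f (ut t) = modelG B (modelv B t))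
    (h11a : Tendsto (fun t => (-Real.log t) ^ ((1 : ℝ) / 2) * (R1 f ut B t + R2 f ut B t))
      (nhdsWithin 0 (Set.Ioi 0)) (nhds 0))
    (hfC1 : ContDiffOn ℝ 1 f (Set.Ici 0))
    (hfpos0 : ∀ s > (0 : ℝ), 0 < f s)
    (hf'0 : ∀ s > (0 : ℝ), 0 < deriv f s)
    (hfint0 : ∀ s > (0 : ℝ), IntegrableOn (fun τ => 1 / f τ) (Set.Ioi s)) :
    ∃ R > (0 : ℝ), ∃ u : ℝ → ℝ,
      ContDiffOn ℝ 2 u (Set.Ioc 0 R) ∧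
      (∀ t ∈ Set.Ioo (0 : ℝ) R, 0 < u t) ∧
      u R = 0 ∧
      (∀ t ∈ Set.Ioo (0 : ℝ) R, deriv (deriv u) t + deriv u t / t + f (u t) = 0) ∧
      Tendsto u (nhdsWithin 0 (Set.Ioi 0)) atTop ∧
      ∃ r₀ ∈ Set.Ioo (0 : ℝ) R, ∃ C > (0 : ℝ),
        ∀ t ∈ Set.Ioo (0 : ℝ) r₀,
          |u t - ut t| ≤ C * f (ut t) * Fint f (ut t) *
            sSup ((fun s => R1 f ut B s + R2 f ut B s) '' Set.Ioc 0 t) := by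
  obtain ⟨r2, C, U, P, hr2, hC, hUtop, hU⟩ :=
    P6 f ut s₀ B t₁ hf hfpos hf' hfint hB hf2a hf2b ht₁ hut h11a
  obtain ⟨r3, hr3, hP3⟩ := exists_pos_slope hUtop fun r hr => (hU r hr).2.1
  obtain ⟨W, Q, L, rR, hLR, hR3, hW3, hQ3, hWR, hWpos, hWd⟩ :=
    P7 f (U r3) (P r3) r3 (hs₀.trans (hU r3 hr3).1) hP3 hfC1 hfpos0
  set Ut : ℝ → ℝ := fun x => if x ≤ r3 then W x else U x with hUt
  set Pt : ℝ → ℝ := fun x => if x ≤ r3 then Q x else P x with hPt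
  have d1 : ∀ r, L < r → HasDerivAt Ut (Pt r) r := fun r hr =>
    glue_hasDerivAt hW3 hQ3 (fun r hr => (hWd r hr).1)
      (fun r hr => (hU r (hr3.trans_le hr)).2.1) r hr
  have hmax : ∀ r, r3 ≤ r → max 0 (U r) = U r := fun r hr =>
    max_eq_right (hs₀.trans (hU r (hr3.trans_le hr)).1).le
  have d2 : ∀ r, L < r →
      HasDerivAt Pt (-(f (max 0 (Ut r)) * Real.exp (-(r - 1)) / 4)) r := by
    intro r hr
    have h := glue_hasDerivAt (W := Q) (U := P)
      (w := fun r => -(f (max 0 (W r)) * Real.exp (-(r - 1)) / 4))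
      (p := fun r => -(f (U r) * Real.exp (-(r - 1)) / 4)) (L := L) (r3 := r3) hQ3
      (by simp only [hW3, hmax r3 le_rfl]) (fun r hr => (hWd r hr).2)
      (fun r hr => (hU r (hr3.trans_le hr)).2.2.1) r hr
    refine h.congr_deriv ?_
    by_cases hr' : r ≤ r3
    · simp only [hUt, if_pos hr']
    · simp only [hUt, if_neg hr', hmax r (not_le.mp hr').le]
  have hUpos : ∀ r, rR < r → 0 < Ut r := by
    intro r hr
    by_cases hr' : r ≤ r3
    · simp only [hUt, if_pos hr']
      exact hWpos r ⟨hr, hr'⟩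
    · simp only [hUt, if_neg hr']
      exact hs₀.trans (hU r (hr3.trans (not_le.mp hr'))).1
  have hlift := lift_deriv d1 d2
  have hRlt : tt rR < tt L := by
    rw [log_lt_of_tt (tt_pos rR)]
    have := tt_log rR
    linarith
  have hmem : ∀ t ∈ Set.Ioo 0 (tt L), L < 1 - 2 * Real.log t := fun t ht =>
    (log_lt_of_tt ht.1).mp ht.2
  have hC2 : ContDiffOn ℝ 2 (fun t => Ut (1 - 2 * Real.log t)) (Set.Ioo 0 (tt L)) := by
    refine contDiffOn_two_of isOpen_Ioo (fun t ht => (hlift t ht.1 (hmem t ht)).1)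
      (fun t ht => (hlift t ht.1 (hmem t ht)).2) ?_
    have hlog : ContinuousOn (fun t => 1 - 2 * Real.log t) (Set.Ioo 0 (tt L)) := by
      refine continuousOn_const.sub (continuousOn_const.mul ?_)
      exact Real.continuousOn_log.mono fun t ht => ht.1.ne'
    have hUc : ContinuousOn (fun t => Ut (1 - 2 * Real.log t)) (Set.Ioo 0 (tt L)) :=
      fun t ht => (hlift t ht.1 (hmem t ht)).1.continuousAt.continuousWithinAt
    have hPc : ContinuousOn (fun t => Pt (1 - 2 * Real.log t)) (Set.Ioo 0 (tt L)) := by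
      have : ContinuousOn Pt (Set.Ioi L) := fun r hr => (d2 r hr).continuousAt.continuousWithinAt
      exact this.comp hlog hmem
    have hfc : ContinuousOn (fun t => f (max 0 (Ut (1 - 2 * Real.log t)))) (Set.Ioo 0 (tt L)) :=
      hfC1.continuousOn.comp (continuousOn_const.sup hUc) fun t ht => Set.mem_Ici.mpr (le_max_left _ _)
    have hinv : ∀ c : ℝ, ContinuousOn (fun t : ℝ => c / t ^ 2) (Set.Ioo 0 (tt L)) := fun c =>
      continuousOn_const.div (continuousOn_id.pow 2) fun t ht => pow_ne_zero 2 ht.1.ne'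
    refine ((hinv 2).mul hPc).add ((hinv 4).mul ?_)
    refine ((hfc.mul ?_).div_const 4).neg
    exact Real.continuous_exp.comp_continuousOn (hlog.sub continuousOn_const).neg
  have hRr : 1 - 2 * Real.log (tt rR) = rR := by
    have := tt_log rR
    linarith
  refine ⟨tt rR, tt_pos rR, fun t => Ut (1 - 2 * Real.log t), ?_, ?_, ?_, ?_, ?_, tt r3, ?_, C, hC,
    ?_⟩
  · exact hC2.mono fun t ht => ⟨ht.1, ht.2.trans_lt hRlt⟩
  · exact fun t ht => hUpos _ ((log_lt_of_tt ht.1).mp ht.2)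
  · simp only [hRr, hUt, if_pos hR3.le, hWR]
  · intro t ht
    have ht' : t ∈ Set.Ioo 0 (tt L) := ⟨ht.1, ht.2.trans hRlt⟩
    have hd := hlift t ht.1 (hmem t ht')
    have hev : deriv (fun t => Ut (1 - 2 * Real.log t)) =ᶠ[nhds t]
        fun t => -2 / t * Pt (1 - 2 * Real.log t) := by
      filter_upwards [isOpen_Ioo.mem_nhds ht'] with x hx
      exact (hlift x hx.1 (hmem x hx)).1.deriv
    rw [hev.deriv_eq, hd.2.deriv, hd.1.deriv, exp_inv ht.1,
      max_eq_right (hUpos _ ((log_lt_of_tt ht.1).mp ht.2)).le]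
    have := ht.1.ne'
    field_simp
    ring
  · have hl : Tendsto (fun t => 1 - 2 * Real.log t) (nhdsWithin 0 (Set.Ioi 0)) atTop := by
      have h := (Real.tendsto_log_nhdsGT_zero.const_mul_atBot_of_neg
        (show (-2 : ℝ) < 0 by norm_num))
      refine (tendsto_atTop_add_const_left _ 1 h).congr fun t => by ring
    refine Tendsto.comp (g := Ut) ?_ hl
    refine hUtop.congr' ?_
    filter_upwards [eventually_gt_atTop r3] with r hr
    simp only [hUt, if_neg (not_le.mpr hr)]
  · refine ⟨tt_pos r3, ?_⟩
    rw [log_lt_of_tt (tt_pos r3)]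
    have := tt_log r3
    linarith
  · intro t ht
    have hr : r3 < 1 - 2 * Real.log t := (log_lt_of_tt ht.1).mp ht.2
    have h := (hU _ (hr3.trans hr)).2.2.2
    rw [tt_inv ht.1] at h
    simp only [hUt, if_neg (not_le.mpr hr)]
    exact h
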